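/- arXiv:math/0406353 — 4 statements merged into one kernel-verified Lean document; each statement's English description precedes it below -/
import Mathlib

section
/- There exists a universal constant c > 0 such that for every real ε with 0 < ε < 1 and every finite metric space (X,d) with n ≥ 1 points, there exists a subset Y ⊆ X with |Y| ≥ n^(c·ε/log(2/ε)) together with an ultrametric ρ on Y satisfying d(x,y) ≤ ρ(x,y) ≤ (2+ε)·d(x,y) for all x,y ∈ Y. -/
/-- `ρ` is an ultrametric on the subset `Y` of `X`. -/
def IsUltrametricOn {X : Type} (Y : Set X) (ρ : X → X → ℝ) : Prop :=
  (∀ x ∈ Y, ρ x x = 0) ∧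
  (∀ x ∈ Y, ∀ y ∈ Y, x ≠ y → 0 < ρ x y) ∧
  (∀ x ∈ Y, ∀ y ∈ Y, ρ x y = ρ y x) ∧
  (∀ x ∈ Y, ∀ y ∈ Y, ∀ z ∈ Y, ρ x z ≤ max (ρ x y) (ρ y z))

/-- Number of points in the closed ball. -/
noncomputable def nbr {X : Type} [MetricSpace X] [Fintype X] (r : ℝ) (x : X) : ℕ := by
  classical
  exact (Finset.univ.filter (fun y => dist x y ≤ r)).card

lemma nbr_pos {X : Type} [MetricSpace X] [Fintype X] {r : ℝ} (hr : 0 ≤ r) (x : X) :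
    0 < nbr r x := by
  classical
  unfold nbr
  exact Finset.card_pos.mpr ⟨x, by simp [hr]⟩

lemma nbr_le {X : Type} [MetricSpace X] [Fintype X] (r : ℝ) (x : X) :
    nbr r x ≤ Fintype.card X := by
  classical
  unfold nbr
  exact Finset.card_le_univ _

/-- Working version of "ultrametric on `Y` with distortion `D`, bounded by `L`". -/
structure GoodOn {X : Type} [MetricSpace X] (Y : Finset X) (ρ : X → X → ℝ) (D L : ℝ) : Prop where
  self : ∀ x ∈ Y, ρ x x = 0
  symm : ∀ x ∈ Y, ∀ y ∈ Y, ρ x y = ρ y x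
  strong : ∀ x ∈ Y, ∀ y ∈ Y, ∀ z ∈ Y, ρ x z ≤ max (ρ x y) (ρ y z)
  lower : ∀ x ∈ Y, ∀ y ∈ Y, dist x y ≤ ρ x y
  upper : ∀ x ∈ Y, ∀ y ∈ Y, ρ x y ≤ D * dist x y
  bdd : ∀ x ∈ Y, ∀ y ∈ Y, ρ x y ≤ L

lemma GoodOn.glue {X : Type} [MetricSpace X] [DecidableEq X] {Y₁ Y₂ : Finset X}
    {ρ₁ ρ₂ : X → X → ℝ} {D L : ℝ} (h₁ : GoodOn Y₁ ρ₁ D L) (h₂ : GoodOn Y₂ ρ₂ D L)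
    (hd : ∀ x ∈ Y₁, ∀ y ∈ Y₂, x ≠ y ∧ dist x y ≤ L ∧ L ≤ D * dist x y) :
    ∃ ρ, GoodOn (Y₁ ∪ Y₂) ρ D L := by
  have hdis : ∀ x ∈ Y₁, x ∉ Y₂ := fun x h1 h2 => (hd x h1 x h2).1 rfl
  have hdis' : ∀ x ∈ Y₂, x ∉ Y₁ := fun x h1 h2 => (hd x h2 x h1).1 rfl
  refine ⟨fun x y => if x ∈ Y₁ ∧ y ∈ Y₁ then ρ₁ x y else
    if x ∈ Y₂ ∧ y ∈ Y₂ then ρ₂ x y else L, ?_, ?_, ?_, ?_, ?_, ?_⟩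
  · intro x hx
    rcases Finset.mem_union.1 hx with hx | hx
    · simp [hx, h₁.self x hx]
    · simp [hx, hdis' x hx, h₂.self x hx]
  · intro x hx y hy
    rcases Finset.mem_union.1 hx with hx | hx <;> rcases Finset.mem_union.1 hy with hy | hy
    · simp [hx, hy, h₁.symm x hx y hy]
    · simp [hx, hy, hdis x hx, hdis' y hy]
    · simp [hx, hy, hdis' x hx, hdis y hy]
    · simp [hx, hy, hdis' x hx, hdis' y hy, h₂.symm x hx y hy]
  · intro x hx y hy z hz
    rcases Finset.mem_union.1 hx with hx | hx <;> rcases Finset.mem_union.1 hy with hy | hy <;>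
      rcases Finset.mem_union.1 hz with hz | hz
    · simpa [hx, hy, hz] using h₁.strong x hx y hy z hz
    · simp [hx, hy, hz, hdis x hx, hdis y hy, hdis' z hz]
    · simp [hx, hy, hz, hdis x hx, hdis' y hy, hdis z hz, h₁.bdd x hx z hz]
    · simp [hx, hy, hz, hdis x hx, hdis' y hy, hdis' z hz]
    · simp [hx, hy, hz, hdis' x hx, hdis y hy, hdis z hz]
    · simp [hx, hy, hz, hdis' x hx, hdis y hy, hdis' z hz, h₂.bdd x hx z hz]
    · simp [hx, hy, hz, hdis' x hx, hdis' y hy, hdis z hz]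
    · simpa [hx, hy, hz, hdis' x hx, hdis' y hy, hdis' z hz] using h₂.strong x hx y hy z hz
  · intro x hx y hy
    rcases Finset.mem_union.1 hx with hx | hx <;> rcases Finset.mem_union.1 hy with hy | hy
    · simp [hx, hy, h₁.lower x hx y hy]
    · simp [hx, hy, hdis x hx, hdis' y hy, (hd x hx y hy).2.1]
    · simpa [hx, hy, hdis' x hx, hdis y hy, dist_comm] using (hd y hy x hx).2.1
    · simp [hx, hy, hdis' x hx, hdis' y hy, h₂.lower x hx y hy]
  · intro x hx y hy
    rcases Finset.mem_union.1 hx with hx | hx <;> rcases Finset.mem_union.1 hy with hy | hy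
    · simp [hx, hy, h₁.upper x hx y hy]
    · simp [hx, hy, hdis x hx, hdis' y hy, (hd x hx y hy).2.2]
    · simpa [hx, hy, hdis' x hx, hdis y hy, dist_comm] using (hd y hy x hx).2.2
    · simp [hx, hy, hdis' x hx, hdis' y hy, h₂.upper x hx y hy]
  · intro x hx y hy
    rcases Finset.mem_union.1 hx with hx | hx <;> rcases Finset.mem_union.1 hy with hy | hy
    · simp [hx, hy, h₁.bdd x hx y hy]
    · simp [hx, hy, hdis x hx, hdis' y hy]
    · simp [hx, hy, hdis' x hx, hdis y hy]
    · simp [hx, hy, hdis' x hx, hdis' y hy, h₂.bdd x hx y hy]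

/-- Choice of a good center. -/
lemma exists_center {X : Type} [MetricSpace X] [Fintype X] [DecidableEq X] (S : Finset X)
    (hS : S.Nonempty) (w : X → ℝ) {r R : ℝ} (hR : 0 ≤ R) (hrR : r ≤ R) :
    ∃ c, (∃ x ∈ S, dist x c ≤ R) ∧
      ∑ x ∈ S with dist x c ≤ R, (nbr r x : ℝ) / (nbr R x : ℝ) * w x
        ≤ ∑ x ∈ S with dist x c ≤ r, w x := by
  classical
  by_contra! hcon
  have e1 : ∀ (t : ℝ) (f : X → ℝ),
      ∑ c, ∑ x ∈ S with dist x c ≤ t, f x = ∑ x ∈ S, (nbr t x : ℝ) * f x := by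
    intro t f
    simp_rw [Finset.sum_filter]
    rw [Finset.sum_comm]
    refine Finset.sum_congr rfl fun x _ => ?_
    rw [← Finset.sum_filter, Finset.sum_const, nsmul_eq_mul]
    simp [nbr]
  have h1 := e1 r w
  have h2 := e1 R (fun x => (nbr r x : ℝ) / (nbr R x : ℝ) * w x)
  have h3 : ∑ x ∈ S, (nbr R x : ℝ) * ((nbr r x : ℝ) / (nbr R x : ℝ) * w x)
      = ∑ x ∈ S, (nbr r x : ℝ) * w x := by
    refine Finset.sum_congr rfl fun x _ => ?_
    have : (nbr R x : ℝ) ≠ 0 := by exact_mod_cast (nbr_pos hR x).ne'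
    field_simp
  have h4 : ∑ c, ∑ x ∈ S with dist x c ≤ r, w x <
      ∑ c, ∑ x ∈ S with dist x c ≤ R, (nbr r x : ℝ) / (nbr R x : ℝ) * w x := by
    obtain ⟨x0, hx0⟩ := hS
    refine Finset.sum_lt_sum ?_ ⟨x0, Finset.mem_univ _, hcon x0 ⟨x0, hx0, by simpa using hR⟩⟩
    intro c _
    by_cases hc : ∃ x ∈ S, dist x c ≤ R
    · exact (hcon c hc).le
    · push Not at hc
      rw [Finset.filter_false_of_mem, Finset.filter_false_of_mem]
      · simp
      · exact fun x hx => not_le.2 (hc x hx)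
      · exact fun x hx => not_le.2 (hrR.trans_lt (hc x hx))
  rw [h1, h2, h3] at h4
  exact lt_irrefl _ h4

/-- Weights: product of ball ratios along `m` levels. -/
noncomputable def wt {X : Type} [MetricSpace X] [Fintype X] (r : ℕ → ℝ) (M : ℕ) :
    ℕ → ℕ → X → ℝ
  | 0, _, _ => 1
  | m + 1, i, x => (nbr (r (i + M)) x : ℝ) / (nbr (r (i + 1)) x : ℝ) * wt r M m (i + M) x

lemma wt_pos {X : Type} [MetricSpace X] [Fintype X] (r : ℕ → ℝ) (hr : ∀ i, 0 ≤ r i) (M : ℕ) (m : ℕ)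
    (i : ℕ) (x : X) : 0 < wt r M m i x := by
  induction m generalizing i with
  | zero => simp [wt]
  | succ m ih =>
    have h1 := nbr_pos (hr (i + M)) x
    have h2 := nbr_pos (hr (i + 1)) x
    have := ih (i + M)
    unfold wt
    positivity

lemma main_induction {X : Type} [MetricSpace X] [Fintype X] (r : ℕ → ℝ) (hr : ∀ i, 0 ≤ r i)
    (hanti : Antitone r) (M : ℕ) (hM : 1 ≤ M) (D : ℝ) (hD : 0 ≤ D)
    (hsep : ∀ i, 2 * r i ≤ D * (r (i + 1) - r (i + M))) (m : ℕ) :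
    ∀ i, (∀ x y : X, dist x y ≤ 2 * r (i + m * M) → x = y) →
    ∀ S : Finset X, (∀ x ∈ S, ∀ y ∈ S, dist x y ≤ 2 * r i) →
      ∃ Y ⊆ S, ∃ ρ, GoodOn Y ρ D (2 * r i) ∧ ∑ x ∈ S, wt r M m i x ≤ (Y.card : ℝ) := by
  classical
  induction m with
  | zero =>
    intro i hi S hS
    have hsub : ∀ x ∈ S, ∀ y ∈ S, x = y := fun x hx y hy => hi x y (by simpa using hS x hx y hy)
    refine ⟨S, subset_rfl, fun _ _ => 0, ⟨?_, ?_, ?_, ?_, ?_, ?_⟩, ?_⟩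
    · simp
    · simp
    · simp
    · intro x hx y hy
      simp [hsub x hx y hy]
    · intro x hx y hy
      positivity
    · intro x hx y hy
      have := hr i
      positivity
    · simp [wt]
  | succ m ih =>
    intro i hi S
    induction S using Finset.strongInduction with
    | H S ihS =>
    intro hS
    rcases S.eq_empty_or_nonempty with rfl | hne
    · refine ⟨∅, subset_rfl, fun _ _ => 0, ⟨?_, ?_, ?_, ?_, ?_, ?_⟩, ?_⟩ <;> simp
    obtain ⟨c, ⟨x0, hx0, hx0c⟩, hc⟩ := exists_center S hne (wt r M m (i + M)) (hr (i + 1))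
      (hanti (by omega : i + 1 ≤ i + M))
    have hri : r (i + M) ≤ r i := hanti (by omega)
    obtain ⟨Y₁, hY₁, ρ₁, g₁, c₁⟩ := ih (i + M)
      (by intro x y h; apply hi x y; convert h using 3; ring)
      (S.filter (fun x => dist x c ≤ r (i + M))) (by
        intro x hx y hy
        have hx := (Finset.mem_filter.1 hx).2
        have hy := (Finset.mem_filter.1 hy).2
        have := dist_triangle_right x y c
        linarith)
    obtain ⟨Y₂, hY₂, ρ₂, g₂, c₂⟩ := ihS (S.filter (fun x => ¬ dist x c ≤ r (i + 1)))
      (by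
        refine Finset.filter_ssubset.2 ⟨x0, hx0, by simpa using hx0c⟩)
      (fun x hx y hy => hS x (Finset.mem_filter.1 hx).1 y (Finset.mem_filter.1 hy).1)
    have g₁' : GoodOn Y₁ ρ₁ D (2 * r i) :=
      ⟨g₁.self, g₁.symm, g₁.strong, g₁.lower, g₁.upper,
        fun x hx y hy => (g₁.bdd x hx y hy).trans (by linarith)⟩
    have hsepd : ∀ x ∈ Y₁, ∀ y ∈ Y₂, x ≠ y ∧ dist x y ≤ 2 * r i ∧ 2 * r i ≤ D * dist x y := by
      intro x hx y hy
      obtain ⟨hxS, hx⟩ := Finset.mem_filter.1 (hY₁ hx)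
      obtain ⟨hyS, hy⟩ := Finset.mem_filter.1 (hY₂ hy)
      refine ⟨?_, hS x hxS y hyS, ?_⟩
      · rintro rfl
        exact hy (hx.trans (hanti (by omega)))
      · refine (hsep i).trans (mul_le_mul_of_nonneg_left ?_ hD)
        have := dist_triangle_left y c x
        linarith
    obtain ⟨ρ, g⟩ := GoodOn.glue g₁' g₂ hsepd
    refine ⟨Y₁ ∪ Y₂, Finset.union_subset (hY₁.trans (Finset.filter_subset _ _))
      (hY₂.trans (Finset.filter_subset _ _)), ρ, g, ?_⟩
    rw [Finset.card_union_of_disjoint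
      (Finset.disjoint_left.2 fun x h1 h2 => (hsepd x h1 x h2).1 rfl)]
    rw [← Finset.sum_filter_add_sum_filter_not S (fun x => dist x c ≤ r (i + 1))]
    push_cast
    exact add_le_add (hc.trans c₁) c₂

lemma prod_wt {X : Type} [MetricSpace X] [Fintype X] (r : ℕ → ℝ) (hr : ∀ i, 0 ≤ r i)
    (M : ℕ) (x : X) (m : ℕ) : ∀ i,
    (∏ j ∈ Finset.range M, wt r M m (i + j) x) *
      ((∏ j ∈ Finset.range M, (nbr (r (i + j)) x : ℝ)) * nbr (r (i + m * M)) x)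
    = (∏ j ∈ Finset.range M, (nbr (r (i + m * M + j)) x : ℝ)) * nbr (r i) x := by
  have hp : ∀ i, (nbr (r i) x : ℝ) ≠ 0 := fun i => by exact_mod_cast (nbr_pos (hr i) x).ne'
  induction m with
  | zero => intro i; simp [wt]
  | succ m ih =>
    intro i
    have h := ih (i + M)
    have hstep : (∏ j ∈ Finset.range M, wt r M (m + 1) (i + j) x)
        = (∏ j ∈ Finset.range M, (nbr (r (i + M + j)) x : ℝ)) /
          (∏ j ∈ Finset.range M, (nbr (r (i + (j + 1))) x : ℝ)) *
          ∏ j ∈ Finset.range M, wt r M m (i + M + j) x := by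
      rw [← Finset.prod_div_distrib, ← Finset.prod_mul_distrib]
      refine Finset.prod_congr rfl fun j _ => ?_
      rw [wt, show i + j + M = i + M + j by ring, show i + (j + 1) = i + j + 1 by ring]
    have hshift : (∏ j ∈ Finset.range M, (nbr (r (i + (j + 1))) x : ℝ)) * nbr (r i) x
        = (∏ j ∈ Finset.range M, (nbr (r (i + j)) x : ℝ)) * nbr (r (i + M)) x := by
      have a := Finset.prod_range_succ (fun j => (nbr (r (i + j)) x : ℝ)) M
      have b := Finset.prod_range_succ' (fun j => (nbr (r (i + j)) x : ℝ)) M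
      rw [← a, b]; simp
    have e : i + (m + 1) * M = i + M + m * M := by ring
    rw [e, hstep]
    have hq : (∏ j ∈ Finset.range M, (nbr (r (i + (j + 1))) x : ℝ)) ≠ 0 :=
      Finset.prod_ne_zero_iff.2 fun j _ => hp _
    have hMne := hp (i + M)
    generalize (∏ j ∈ Finset.range M, (nbr (r (i + (j + 1))) x : ℝ)) = A at *
    generalize (∏ j ∈ Finset.range M, (nbr (r (i + j)) x : ℝ)) = B at *
    generalize (∏ j ∈ Finset.range M, (nbr (r (i + M + j)) x : ℝ)) = C at *
    generalize (∏ j ∈ Finset.range M, (nbr (r (i + M + m * M + j)) x : ℝ)) = E at *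
    generalize (∏ j ∈ Finset.range M, wt r M m (i + M + j) x) = W at *
    generalize (nbr (r (i + M)) x : ℝ) = u at *
    generalize (nbr (r (i + M + m * M)) x : ℝ) = v at *
    generalize (nbr (r i) x : ℝ) = t at *
    rw [div_mul_eq_mul_div, div_mul_eq_mul_div, div_eq_iff hq]
    apply mul_right_cancel₀ hMne
    linear_combination (C * W * v) * (-hshift) + A * t * h

lemma prod_wt_ge {X : Type} [MetricSpace X] [Fintype X] (r : ℕ → ℝ) (hr : ∀ i, 0 ≤ r i)
    (M : ℕ) (x : X) (m : ℕ) (hend : nbr (r ((m + 1) * (M + 1))) x = 1) :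
    1 ≤ (∏ j ∈ Finset.range (M + 1), wt r (M + 1) (m + 1) j x) * (Fintype.card X : ℝ) ^ M := by
  have h := prod_wt r hr (M + 1) x (m + 1) 0
  simp only [zero_add] at h
  rw [hend, Finset.prod_range_succ' (fun j => (nbr (r j) x : ℝ))] at h
  have hp : (0 : ℝ) < nbr (r 0) x := by exact_mod_cast nbr_pos (hr 0) x
  have h' : (∏ j ∈ Finset.range (M + 1), wt r (M + 1) (m + 1) j x) *
      (∏ j ∈ Finset.range M, (nbr (r (j + 1)) x : ℝ)) =
      ∏ j ∈ Finset.range (M + 1), (nbr (r ((m + 1) * (M + 1) + j)) x : ℝ) := by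
    apply mul_right_cancel₀ hp.ne'
    rw [← h]; push_cast; ring
  have h1 : (1 : ℝ) ≤ ∏ j ∈ Finset.range (M + 1), (nbr (r ((m + 1) * (M + 1) + j)) x : ℝ) := by
    have : 0 < ∏ j ∈ Finset.range (M + 1), nbr (r ((m + 1) * (M + 1) + j)) x :=
      Finset.prod_pos fun j _ => nbr_pos (hr _) x
    exact_mod_cast this
  have h2 : ∏ j ∈ Finset.range M, (nbr (r (j + 1)) x : ℝ) ≤ (Fintype.card X : ℝ) ^ M := by
    have := Finset.prod_le_pow_card (Finset.range M) (fun j => nbr (r (j + 1)) x)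
      (Fintype.card X) (fun j _ => nbr_le _ _)
    rw [Finset.card_range] at this
    exact_mod_cast this
  rw [← h'] at h1
  refine h1.trans (mul_le_mul_of_nonneg_left h2 ?_)
  exact Finset.prod_nonneg fun j _ => (wt_pos r hr _ _ _ _).le

/-- Averaging over phases. -/
lemma exists_phase {X : Type} [MetricSpace X] [Fintype X] (hX : 1 ≤ Fintype.card X)
    (M : ℕ) (f : ℕ → X → ℝ) (hf : ∀ j x, 0 < f j x)
    (h : ∀ x, 1 ≤ (∏ j ∈ Finset.range (M + 1), f j x) * (Fintype.card X : ℝ) ^ M) :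
    ∃ j < M + 1, (Fintype.card X : ℝ) ^ ((1 : ℝ) / ((M + 1 : ℕ) : ℝ)) ≤ ∑ x, f j x := by
  set n : ℝ := (Fintype.card X : ℝ) with hn
  have hn1 : (1 : ℝ) ≤ n := by rw [hn]; exact_mod_cast hX
  have hn0 : 0 < n := by linarith
  set K : ℝ := ((M + 1 : ℕ) : ℝ) with hK
  have hK0 : 0 < K := by positivity
  have key : ∀ x, n ^ (1 / K) / n ≤ ∑ j ∈ Finset.range (M + 1), (1 / K) * f j x := by
    intro x
    have hag := Real.geom_mean_le_arith_mean_weighted (Finset.range (M + 1)) (fun _ => 1 / K)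
      (fun j => f j x) (fun _ _ => by positivity) (by simp [hK]; field_simp)
      (fun j _ => (hf j x).le)
    refine le_trans ?_ hag
    rw [Real.finsetProd_rpow _ _ (fun j _ => (hf j x).le)]
    have hge : n ^ (-(M : ℝ)) ≤ ∏ j ∈ Finset.range (M + 1), f j x := by
      rw [Real.rpow_neg hn0.le, Real.rpow_natCast, inv_le_iff_one_le_mul₀ (by positivity)]
      exact h x
    calc n ^ (1 / K) / n = (n ^ (-(M : ℝ))) ^ (1 / K) := by
          rw [← Real.rpow_mul hn0.le, ← Real.rpow_sub_one hn0.ne']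
          congr 1
          field_simp
          rw [hK]; push_cast; ring
      _ ≤ _ := Real.rpow_le_rpow (by positivity) hge (by positivity)
  by_contra! hcon
  have h1 : ∑ x : X, n ^ (1 / K) / n ≤ ∑ x : X, ∑ j ∈ Finset.range (M + 1), (1 / K) * f j x :=
    Finset.sum_le_sum fun x _ => key x
  rw [Finset.sum_comm] at h1
  have h2 : ∑ j ∈ Finset.range (M + 1), ∑ x : X, (1 / K) * f j x
      < ∑ j ∈ Finset.range (M + 1), (1 / K) * n ^ (1 / K) := by
    refine Finset.sum_lt_sum_of_nonempty ⟨0, by simp⟩ fun j hj => ?_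
    rw [← Finset.mul_sum]
    exact mul_lt_mul_of_pos_left (hcon j (Finset.mem_range.1 hj)) (by positivity)
  simp only [Finset.sum_const, Finset.card_univ, Finset.card_range, nsmul_eq_mul] at h1 h2
  rw [← hn, ← hK] at *
  have e1 : n * (n ^ (1 / K) / n) = n ^ (1 / K) := by field_simp
  have e2 : K * (1 / K * n ^ (1 / K)) = n ^ (1 / K) := by field_simp
  rw [e1] at h1
  rw [e2] at h2
  linarith

/-- The metric part with explicit parameters. -/
lemma ramsey_param {X : Type} [MetricSpace X] [Fintype X] (hX : 1 ≤ Fintype.card X)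
    (l D : ℝ) (hl0 : 0 < l) (hl1 : l < 1) (hD : 0 ≤ D) (M : ℕ)
    (hsep : 2 ≤ D * (l - l ^ (M + 1))) :
    ∃ (Y : Finset X) (ρ : X → X → ℝ) (L : ℝ), GoodOn Y ρ D L ∧
      (Fintype.card X : ℝ) ^ ((1 : ℝ) / ((M + 1 : ℕ) : ℝ)) ≤ (Y.card : ℝ) := by
  classical
  -- an upper bound for the distances
  obtain ⟨B, hB⟩ : ∃ B : ℝ, ∀ p : X × X, dist p.1 p.2 ≤ B := by
    obtain ⟨B, hB⟩ := (Set.finite_range (fun p : X × X => dist p.1 p.2)).bddAbove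
    exact ⟨B, fun p => hB ⟨p, rfl⟩⟩
  -- a lower bound
  obtain ⟨b, hb0, hb⟩ : ∃ b : ℝ, 0 < b ∧ ∀ x y : X, dist x y ≤ b → x = y := by
    let T := (Finset.univ.image (fun p : X × X => dist p.1 p.2)).filter (fun t => 0 < t)
    rcases T.eq_empty_or_nonempty with hT | hT
    · refine ⟨1, one_pos, fun x y _ => ?_⟩
      by_contra hne
      have : dist x y ∈ T := by
        simp only [T, Finset.mem_filter, Finset.mem_image]
        exact ⟨⟨(x, y), by simp⟩, dist_pos.2 hne⟩
      rw [hT] at this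
      simp at this
    · refine ⟨T.min' hT / 2, ?_, fun x y h => ?_⟩
      · have := (Finset.mem_filter.1 (T.min'_mem hT)).2
        positivity
      · by_contra hne
        have hm : dist x y ∈ T := by
          simp only [T, Finset.mem_filter, Finset.mem_image]
          exact ⟨⟨(x, y), by simp⟩, dist_pos.2 hne⟩
        have h1 := T.min'_le _ hm
        have := (Finset.mem_filter.1 (T.min'_mem hT)).2
        linarith
  set A : ℝ := max B 1 / l ^ (M + 1) with hA
  have hA0 : 0 < A := by
    have : (0:ℝ) < max B 1 := lt_max_of_lt_right one_pos
    positivity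
  set r : ℕ → ℝ := fun i => A * l ^ i with hrdef
  have hr : ∀ i, 0 ≤ r i := fun i => by simp only [hrdef]; positivity
  have hanti : Antitone r := by
    intro i j hij
    exact mul_le_mul_of_nonneg_left (pow_le_pow_of_le_one hl0.le hl1.le hij) hA0.le
  have hsep' : ∀ i, 2 * r i ≤ D * (r (i + 1) - r (i + (M + 1))) := by
    intro i
    have h0 : 0 ≤ A * l ^ i := by positivity
    have := mul_le_mul_of_nonneg_left hsep h0
    simp only [hrdef]
    calc 2 * (A * l ^ i) = A * l ^ i * 2 := by ring
      _ ≤ _ := this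
      _ = _ := by ring
  obtain ⟨m, hm⟩ : ∃ m : ℕ, 2 * r m < b := by
    obtain ⟨m, hm⟩ := exists_pow_lt_of_lt_one (show 0 < b / (2 * A) by positivity) hl1
    refine ⟨m, ?_⟩
    rw [lt_div_iff₀ (by positivity)] at hm
    simp only [hrdef]; linarith
  have hsmall : ∀ i, m ≤ i → ∀ x y : X, dist x y ≤ 2 * r i → x = y := by
    intro i hi x y h
    have := hanti hi
    exact hb x y (by linarith)
  have hbig : m ≤ (m + 1) * (M + 1) := by nlinarith
  have hend : ∀ x : X, nbr (r ((m + 1) * (M + 1))) x = 1 := by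
    intro x
    unfold nbr
    rw [Finset.card_eq_one]
    refine ⟨x, ?_⟩
    ext y
    simp only [Finset.mem_filter, Finset.mem_univ, true_and, Finset.mem_singleton]
    constructor
    · intro h
      have := hr ((m + 1) * (M + 1))
      exact (hsmall _ hbig x y (by linarith)).symm
    · rintro rfl
      simpa using hr _
  obtain ⟨j, hj, hsum⟩ := exists_phase hX M (fun j x => wt r (M + 1) (m + 1) j x)
    (fun j x => wt_pos r hr _ _ _ _) (fun x => prod_wt_ge r hr M x m (hend x))
  obtain ⟨Y, -, ρ, g, hc⟩ := main_induction r hr hanti (M + 1) (by omega) D hD hsep' (m + 1) j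
    (hsmall _ (by omega)) Finset.univ (by
      intro x _ y _
      have h1 := hB (x, y)
      have h2 : r (M + 1) ≤ r j := hanti hj.le
      have h3 : r (M + 1) = max B 1 := by
        simp only [hrdef, hA]; field_simp
      have h4 := le_max_left B 1
      have := hr j
      simp only at h1
      linarith)
  exact ⟨Y, ρ, _, g, hsum.trans hc⟩

lemma choose_M (ε : ℝ) (h0 : 0 < ε) (h1 : ε < 1) : ∃ M : ℕ,
    (1 - ε / 8) ^ (M + 1) ≤ ε / 8 ∧
    (1 / 40 : ℝ) * ε / Real.log (2 / ε) ≤ 1 / ((M + 1 : ℕ) : ℝ) := by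
  have hl2 : (1 / 2 : ℝ) ≤ Real.log 2 := by have := Real.log_two_gt_d9; linarith
  have hle : Real.log ε ≤ 0 := Real.log_nonpos h0.le h1.le
  have hL : Real.log (2 / ε) = Real.log 2 - Real.log ε := Real.log_div (by norm_num) h0.ne'
  have h8 : Real.log (8 / ε) = 3 * Real.log 2 - Real.log ε := by
    rw [Real.log_div (by norm_num) h0.ne', show (8 : ℝ) = 2 ^ 3 by norm_num, Real.log_pow]
    norm_num
  set Lg := Real.log (2 / ε)
  have hLg : 1 / 2 ≤ Lg := by linarith
  have h8' : Real.log (8 / ε) ≤ 3 * Lg := by linarith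
  have h80 : 0 ≤ Real.log (8 / ε) := by linarith
  set q := 8 * Real.log (8 / ε) / ε with hq
  have hq0 : 0 ≤ q := by positivity
  refine ⟨⌈q⌉₊, ?_, ?_⟩
  · have hc : q ≤ ((⌈q⌉₊ + 1 : ℕ) : ℝ) := by
      have := Nat.le_ceil q
      push_cast; linarith
    calc (1 - ε / 8) ^ (⌈q⌉₊ + 1) ≤ (Real.exp (-(ε / 8))) ^ (⌈q⌉₊ + 1) :=
          pow_le_pow_left₀ (by linarith) (Real.one_sub_le_exp_neg _) _
      _ = Real.exp (((⌈q⌉₊ + 1 : ℕ) : ℝ) * (-(ε / 8))) := (Real.exp_nat_mul _ _).symm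
      _ ≤ Real.exp (-Real.log (8 / ε)) := by
          apply Real.exp_le_exp.2
          have h2 : q * (ε / 8) = Real.log (8 / ε) := by rw [hq]; field_simp
          nlinarith
      _ = ε / 8 := by
          rw [Real.exp_neg, Real.exp_log (by positivity), inv_div]
  · have hc : ((⌈q⌉₊ + 1 : ℕ) : ℝ) ≤ q + 2 := by
      have := Nat.ceil_lt_add_one hq0
      push_cast; linarith
    rw [div_le_div_iff₀ (by linarith) (by positivity)]
    have h2 : q * ε = 8 * Real.log (8 / ε) := by rw [hq]; field_simp
    nlinarith


/-- Metric Ramsey theorem for distortions arbitrarily close to 2: every `n`-point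
metric space contains a subset of size at least `n^(c·ε/log(2/ε))` which is
`(2+ε)`-equivalent to an ultrametric. -/
theorem metric_ramsey_two_plus_eps :
    ∃ c : ℝ, 0 < c ∧
      ∀ (ε : ℝ), 0 < ε → ε < 1 →
        ∀ (X : Type) [MetricSpace X] [Fintype X], 1 ≤ Fintype.card X →
          ∃ (Y : Finset X) (ρ : X → X → ℝ),
            (Fintype.card X : ℝ) ^ (c * ε / Real.log (2 / ε)) ≤ (Y.card : ℝ) ∧
            IsUltrametricOn (↑Y) ρ ∧
            ∀ x ∈ Y, ∀ y ∈ Y,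
              dist x y ≤ ρ x y ∧ ρ x y ≤ (2 + ε) * dist x y := by
  refine ⟨1 / 40, by norm_num, ?_⟩
  intro ε h0 h1 X _ _ hX
  obtain ⟨M, hM1, hM2⟩ := choose_M ε h0 h1
  obtain ⟨Y, ρ, L, g, hc⟩ := ramsey_param hX (1 - ε / 8) (2 + ε) (by linarith) (by linarith)
    (by linarith) M (by nlinarith)
  refine ⟨Y, ρ, ?_, ⟨?_, ?_, ?_, ?_⟩, ?_⟩
  · refine le_trans (Real.rpow_le_rpow_of_exponent_le ?_ hM2) hc
    exact_mod_cast hX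
  · exact fun x hx => g.self x hx
  · exact fun x hx y hy hne => (dist_pos.2 hne).trans_le (g.lower x hx y hy)
  · exact fun x hx y hy => g.symm x hx y hy
  · exact fun x hx y hy z hz => g.strong x hx y hy z hz
  · exact fun x hx y hy => ⟨g.lower x hx y hy, g.upper x hx y hy⟩
end

section
/- There exist universal constants c, C > 0 such that for every real α > 2 and every integer n ≥ 1, there exists a metric space X on n points with the property that every subset Y ⊆ X admitting an α-embedding into ℓ₂ satisfies |Y| ≤ C·n^(1 − c/α). -/
/-- `d` is a metric on `X`. -/
def IsMetricOn {X : Type} (d : X → X → ℝ) : Prop :=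
  (∀ x, d x x = 0) ∧ (∀ x y, x ≠ y → 0 < d x y) ∧
  (∀ x y, d x y = d y x) ∧ (∀ x y z, d x z ≤ d x y + d y z)

namespace RUB

abbrev V (k : ℕ) := Fin k → ZMod 2

noncomputable def ep (a : ZMod 2) : ℝ := if a = 0 then 1 else -1

noncomputable def chi {k : ℕ} (u x : V k) : ℝ := ∏ i, ep (u i * x i)

lemma zmod2_cases (a : ZMod 2) : a = 0 ∨ a = 1 := by
  revert a; decide

lemma ep_zero : ep 0 = 1 := by simp [ep]
lemma ep_one : ep 1 = -1 := by simp [ep]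

lemma ep_add (a b : ZMod 2) : ep (a + b) = ep a * ep b := by
  have h11 : (1 : ZMod 2) + 1 = 0 := by decide
  rcases zmod2_cases a with rfl | rfl <;> rcases zmod2_cases b with rfl | rfl <;>
    simp [ep_zero, ep_one, h11]

lemma chi_add {k : ℕ} (u x y : V k) : chi u (x + y) = chi u x * chi u y := by
  simp [chi, mul_add, ep_add, Finset.prod_mul_distrib]

lemma chi_comm {k : ℕ} (u x : V k) : chi u x = chi x u := by
  simp [chi, mul_comm]

lemma chi_zero {k : ℕ} (u : V k) : chi u 0 = 1 := by simp [chi, ep_zero]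
lemma zero_chi {k : ℕ} (u : V k) : chi 0 u = 1 := by simp [chi, ep_zero]

lemma V_add_self {k : ℕ} (x : V k) : x + x = 0 := by
  funext i
  have : ∀ a : ZMod 2, a + a = 0 := by decide
  exact this _

lemma chi_cases {k : ℕ} (u x : V k) : chi u x = 1 ∨ chi u x = -1 := by
  have h : chi u x * chi u x = 1 := by rw [← chi_add, V_add_self, chi_zero]
  exact mul_self_eq_one_iff.mp h

lemma sum_ep (a : ZMod 2) : ∑ b : ZMod 2, ep (b * a) = if a = 0 then 2 else 0 := by
  have h2 : (Finset.univ : Finset (ZMod 2)) = {0, 1} := by decide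
  rw [h2, Finset.sum_pair (by decide)]
  rcases zmod2_cases a with rfl | rfl
  · simp [ep_zero]; norm_num
  · simp [ep_zero, ep_one]

lemma sum_chi {k : ℕ} (x : V k) : ∑ u : V k, chi u x = if x = 0 then (2 : ℝ) ^ k else 0 := by
  have h : ∑ u : V k, chi u x = ∏ i, ∑ b : ZMod 2, ep (b * x i) := by
    rw [Finset.prod_univ_sum]
    simp [chi]
  rw [h]
  simp_rw [sum_ep]
  split_ifs with hx
  · subst hx; simp
  · obtain ⟨i, hi⟩ : ∃ i, x i ≠ 0 := by
      by_contra hc; push Not at hc; exact hx (funext hc)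
    exact Finset.prod_eq_zero (Finset.mem_univ i) (by simp [hi])

lemma card_V (k : ℕ) : Fintype.card (V k) = 2 ^ k := by
  simp [V, ZMod.card]

/-- Selection of the generators by a first moment argument. -/
lemma exists_gen (k : ℕ) : ∃ s : Fin (8 * k) → V k, ∀ u : V k, u ≠ 0 →
    ∑ i, chi u (s i) ≤ 4 * k := by
  classical
  have key : ∀ u : V k, u ≠ 0 →
      ∑ s : Fin (8 * k) → V k, ∏ i, (2 + chi u (s i)) = (2 * 2 ^ k : ℝ) ^ (8 * k) := by
    intro u hu
    have h := Finset.prod_univ_sum (fun _ : Fin (8 * k) => (Finset.univ : Finset (V k)))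
      (fun _ v => 2 + chi u v)
    simp only [Fintype.piFinset_univ] at h
    rw [← h]
    have h1 : ∑ v : V k, chi u v = 0 := by
      simp_rw [chi_comm u]
      rw [sum_chi, if_neg hu]
    simp [Finset.sum_add_distrib, h1, mul_comm]
  have hpos : ∀ (u : V k) (s : Fin (8 * k) → V k), 0 ≤ ∏ i, (2 + chi u (s i)) := by
    intro u s
    refine Finset.prod_nonneg fun i _ => ?_
    rcases chi_cases u (s i) with h | h <;> rw [h] <;> norm_num
  have hcardU : ((Finset.univ.filter (fun u : V k => u ≠ 0)).card : ℝ) ≤ 2 ^ k := by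
    have := Finset.card_filter_le (Finset.univ : Finset (V k)) (fun u => u ≠ 0)
    rw [Finset.card_univ, card_V] at this
    exact_mod_cast this
  obtain ⟨s, -, hs⟩ : ∃ s ∈ (Finset.univ : Finset (Fin (8 * k) → V k)),
      ∑ u ∈ Finset.univ.filter (fun u : V k => u ≠ 0), ∏ i, (2 + chi u (s i))
        ≤ (2 : ℝ) ^ (9 * k) := by
    apply Finset.exists_le_of_sum_le ⟨0, Finset.mem_univ _⟩
    rw [Finset.sum_comm]
    rw [Finset.sum_congr rfl (fun u hu => key u (by simpa using hu))]
    simp only [Finset.sum_const, nsmul_eq_mul, Finset.card_univ]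
    rw [Fintype.card_fun, card_V, Fintype.card_fin]
    push_cast
    calc _ ≤ (2 : ℝ) ^ k * (2 * 2 ^ k) ^ (8 * k) := by gcongr
      _ = _ := by rw [mul_pow]; ring
  refine ⟨s, fun u hu => ?_⟩
  have hu1 : ∏ i, (2 + chi u (s i)) ≤ (2 : ℝ) ^ (9 * k) :=
    le_trans (Finset.single_le_sum (f := fun u => ∏ i, (2 + chi u (s i)))
      (fun u _ => hpos u s) (by simpa using hu)) hs
  set p := (Finset.univ.filter (fun i => chi u (s i) = 1)).card with hp
  have e1 : ∏ i, (2 + chi u (s i)) = 3 ^ p := by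
    have : ∀ i, (2 + chi u (s i)) = if chi u (s i) = 1 then 3 else 1 := by
      intro i
      rcases chi_cases u (s i) with h | h <;> rw [h] <;> norm_num
    simp_rw [this]
    rw [Finset.prod_ite]; simp [hp]
  have e2 : ∑ i, chi u (s i) = 2 * p - 8 * k := by
    have : ∀ i, chi u (s i) = 2 * (if chi u (s i) = 1 then 1 else 0) - 1 := by
      intro i
      rcases chi_cases u (s i) with h | h <;> rw [h] <;> norm_num
    rw [Finset.sum_congr rfl (fun i _ => this i), Finset.sum_sub_distrib, ← Finset.mul_sum,
      Finset.sum_boole]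
    simp [hp]
  have hp6 : p ≤ 6 * k := by
    by_contra hc
    push Not at hc
    rw [e1] at hu1
    have h3 : (3 : ℝ) ^ (6 * k + 1) ≤ 3 ^ p := pow_le_pow_right₀ (by norm_num) hc
    have h4 : (2 : ℝ) ^ (9 * k) ≤ 3 ^ (6 * k) := by
      rw [pow_mul, pow_mul]; gcongr; norm_num
    have h5 : (0 : ℝ) < 3 ^ (6 * k) := by positivity
    rw [pow_succ] at h3
    linarith
  rw [e2]
  have : (p : ℝ) ≤ 6 * k := by exact_mod_cast hp6
  linarith

noncomputable def lam {k m : ℕ} (s : Fin m → V k) (u : V k) : ℝ :=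
  (1 / (2 * m)) * ∑ i, (1 + chi u (s i))

noncomputable def aker {k m : ℕ} (s : Fin m → V k) (t : ℕ) (v : V k) : ℝ :=
  (1 / 2 ^ k) * ∑ u : V k, lam s u ^ t * chi u v

def Reach {k m : ℕ} (s : Fin m → V k) (t : ℕ) (v : V k) : Prop :=
  ∃ c : Fin m → ZMod 2, hammingNorm c ≤ t ∧ ∑ i, c i • s i = v

lemma lam_nonneg {k m : ℕ} (s : Fin m → V k) (u : V k) : 0 ≤ lam s u := by
  unfold lam
  refine mul_nonneg (by positivity) (Finset.sum_nonneg fun i _ => ?_)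
  rcases chi_cases u (s i) with h | h <;> rw [h] <;> norm_num

lemma lam_zero {k m : ℕ} (hm : 0 < m) (s : Fin m → V k) : lam s 0 = 1 := by
  have : (m : ℝ) ≠ 0 := by positivity
  simp [lam, zero_chi]
  field_simp
  norm_num

lemma aker_zero {k m : ℕ} (s : Fin m → V k) (v : V k) : aker s 0 v = if v = 0 then 1 else 0 := by
  simp [aker, sum_chi]

lemma aker_succ {k m : ℕ} (s : Fin m → V k) (t : ℕ) (v : V k) :
    aker s (t + 1) v = (1 / (2 * m)) * ∑ i, (aker s t v + aker s t (v + s i)) := by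
  have h : ∀ i, aker s t v + aker s t (v + s i) =
      (1 / 2 ^ k) * ∑ u : V k, lam s u ^ t * chi u v * (1 + chi u (s i)) := by
    intro i
    simp only [aker, ← mul_add, ← Finset.sum_add_distrib, chi_add]
    congr 1
    refine Finset.sum_congr rfl fun u _ => by ring
  simp_rw [h]
  rw [← Finset.mul_sum, Finset.sum_comm, mul_left_comm, aker, Finset.mul_sum (a := 1 / (2 * (m:ℝ)))]
  congr 1
  refine Finset.sum_congr rfl fun u _ => ?_
  rw [← Finset.mul_sum, pow_succ]
  simp only [lam]
  ring

lemma aker_nonneg {k m : ℕ} (s : Fin m → V k) (t : ℕ) : ∀ v : V k, 0 ≤ aker s t v := by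
  induction t with
  | zero => intro v; rw [aker_zero]; split_ifs <;> norm_num
  | succ t ih =>
    intro v
    rw [aker_succ]
    exact mul_nonneg (by positivity) (Finset.sum_nonneg fun i _ => add_nonneg (ih _) (ih _))

lemma hammingNorm_add_le' {m : ℕ} (a b : Fin m → ZMod 2) :
    hammingNorm (a + b) ≤ hammingNorm a + hammingNorm b := by
  have h := hammingDist_triangle (a + b) b 0
  have e : hammingDist (a + b) b = hammingNorm a := by
    rw [hammingDist_comm, hammingDist_eq_hammingNorm]; simp
  rwa [hammingDist_zero_right, hammingDist_zero_right, e] at h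

lemma reach_add {k m : ℕ} {s : Fin m → V k} {t t' : ℕ} {u v : V k} (h : Reach s t u)
    (h' : Reach s t' v) : Reach s (t + t') (u + v) := by
  obtain ⟨c, hc, rfl⟩ := h
  obtain ⟨c', hc', rfl⟩ := h'
  refine ⟨c + c', (hammingNorm_add_le' c c').trans (add_le_add hc hc'), ?_⟩
  simp [add_smul, Finset.sum_add_distrib]

lemma reach_mono {k m : ℕ} {s : Fin m → V k} {t t' : ℕ} {u : V k} (h : Reach s t u)
    (h' : t ≤ t') : Reach s t' u := by
  obtain ⟨c, hc, rfl⟩ := h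
  exact ⟨c, hc.trans h', rfl⟩

lemma reach_zero {k m : ℕ} (s : Fin m → V k) : Reach s 0 0 := ⟨0, by simp, by simp⟩

lemma reach_gen {k m : ℕ} (s : Fin m → V k) (i : Fin m) : Reach s 1 (s i) := by
  classical
  refine ⟨Pi.single i 1, ?_, ?_⟩
  · unfold hammingNorm
    rw [Finset.card_le_one]
    intro a ha b hb
    simp [Pi.single_apply] at ha hb
    rw [ha, hb]
  · simp [Pi.single_apply, ite_smul]

lemma reach_zero_eq {k m : ℕ} {s : Fin m → V k} {v : V k} (h : Reach s 0 v) : v = 0 := by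
  obtain ⟨c, hc, rfl⟩ := h
  have : c = 0 := hammingNorm_eq_zero.mp (Nat.le_zero.mp hc)
  simp [this]

lemma aker_supp {k m : ℕ} (s : Fin m → V k) (t : ℕ) : ∀ v : V k, aker s t v ≠ 0 → Reach s t v := by
  induction t with
  | zero =>
    intro v hv
    rw [aker_zero] at hv
    by_cases h : v = 0
    · subst h; exact reach_zero s
    · simp [h] at hv
  | succ t ih =>
    intro v hv
    rw [aker_succ] at hv
    obtain ⟨i, -, hi⟩ := Finset.exists_ne_zero_of_sum_ne_zero (right_ne_zero_of_mul hv)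
    by_cases h1 : aker s t v = 0
    · have h2 : aker s t (v + s i) ≠ 0 := by
        intro h; exact hi (by rw [h1, h]; simp)
      have h3 := reach_add (ih _ h2) (reach_gen s i)
      rwa [add_assoc, V_add_self, add_zero] at h3
    · exact reach_mono (ih _ h1) (Nat.le_succ t)

section quad
variable {H : Type*} [NormedAddCommGroup H] [InnerProductSpace ℝ H]

lemma quad_eq {k m : ℕ} (s : Fin m → V k) (t : ℕ) (g : V k → H) :
    ∑ x, ∑ y, aker s t (x + y) * inner ℝ (g x) (g y) =
      (1 / 2 ^ k) * ∑ u : V k, lam s u ^ t * ‖∑ x, chi u x • g x‖ ^ 2 := by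
  have h : ∀ u : V k, ‖∑ x, chi u x • g x‖ ^ 2 =
      ∑ x, ∑ y, chi u (x + y) * inner ℝ (g x) (g y) := by
    intro u
    rw [← real_inner_self_eq_norm_sq, sum_inner]
    refine Finset.sum_congr rfl fun x _ => ?_
    rw [inner_sum]
    refine Finset.sum_congr rfl fun y _ => ?_
    rw [real_inner_smul_left, real_inner_smul_right, chi_add]; ring
  simp_rw [h, aker, Finset.mul_sum, Finset.sum_mul]
  symm
  rw [Finset.sum_comm]
  refine Finset.sum_congr rfl fun x _ => ?_
  rw [Finset.sum_comm]
  refine Finset.sum_congr rfl fun y _ => ?_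
  refine Finset.sum_congr rfl fun u _ => ?_
  ring

lemma parseval {k : ℕ} (g : V k → H) :
    (1 / 2 ^ k) * ∑ u : V k, ‖∑ x, chi u x • g x‖ ^ 2 = ∑ x, ‖g x‖ ^ 2 := by
  have h := quad_eq (m := 0) (fun i => i.elim0) 0 g
  simp only [pow_zero, one_mul] at h
  rw [← h]
  refine Finset.sum_congr rfl fun x _ => ?_
  rw [Finset.sum_eq_single x]
  · rw [V_add_self, aker_zero, if_pos rfl, one_mul, real_inner_self_eq_norm_sq]
  · intro y _ hy
    rw [aker_zero, if_neg, zero_mul]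
    intro hc
    apply hy
    have : x + (x + y) = x + 0 := by rw [hc]
    rw [← add_assoc, V_add_self, zero_add, add_zero] at this
    exact this
  · simp

lemma quad_lower {k m : ℕ} (hm : 0 < m) (s : Fin m → V k) (t : ℕ) (g : V k → H) :
    (1 / 2 ^ k) * ‖∑ x, g x‖ ^ 2 ≤ ∑ x, ∑ y, aker s t (x + y) * inner ℝ (g x) (g y) := by
  rw [quad_eq]
  gcongr
  have := Finset.single_le_sum (f := fun u : V k => lam s u ^ t * ‖∑ x, chi u x • g x‖ ^ 2)
    (fun u _ => mul_nonneg (pow_nonneg (lam_nonneg s u) t) (sq_nonneg _)) (Finset.mem_univ 0)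
  simpa [lam_zero hm, zero_chi] using this

lemma quad_upper {k m : ℕ} (hm : 0 < m) (s : Fin m → V k) (t : ℕ) (g : V k → H) (q : ℝ)
    (hq : 0 ≤ q) (hs : ∀ u, u ≠ 0 → lam s u ≤ q) :
    ∑ x, ∑ y, aker s t (x + y) * inner ℝ (g x) (g y) ≤
      (1 / 2 ^ k) * ‖∑ x, g x‖ ^ 2 + q ^ t * ∑ x, ‖g x‖ ^ 2 := by
  classical
  rw [quad_eq, ← parseval, mul_left_comm, ← mul_add]
  gcongr
  rw [Finset.mul_sum, ← Finset.add_sum_erase _ _ (Finset.mem_univ (0 : V k)),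
    ← Finset.add_sum_erase _ (fun u : V k => q ^ t * _) (Finset.mem_univ (0 : V k))]
  simp only [lam_zero hm, zero_chi, one_pow, one_mul, one_smul]
  have h1 : 0 ≤ q ^ t * ‖∑ x, g x‖ ^ 2 := by positivity
  have h2 : ∑ u ∈ Finset.univ.erase (0 : V k), lam s u ^ t * ‖∑ x, chi u x • g x‖ ^ 2 ≤
      ∑ u ∈ Finset.univ.erase (0 : V k), q ^ t * ‖∑ x, chi u x • g x‖ ^ 2 := by
    refine Finset.sum_le_sum fun u hu => ?_
    have := hs u (Finset.ne_of_mem_erase hu)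
    have := lam_nonneg s u
    gcongr
  linarith

end quad

/-- Passing to a subset with large minimal degree, and Poincare inequality there. -/
lemma poincare_subset {X H : Type*} [Fintype X] [DecidableEq X]
    [NormedAddCommGroup H] [InnerProductSpace ℝ H]
    (K : X → X → ℝ) (hK0 : ∀ x y, 0 ≤ K x y) (hKs : ∀ x y, K x y = K y x)
    (N μ : ℝ) (hN : 0 < N) (hμ : 0 ≤ μ)
    (hlow : ∀ Z : Finset X, (Z.card : ℝ) ^ 2 / N ≤ ∑ x ∈ Z, ∑ y ∈ Z, K x y)
    (hup : ∀ Z : Finset X, ∑ x ∈ Z, ∑ y ∈ Z, K x y ≤ (Z.card : ℝ) ^ 2 / N + μ * Z.card)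
    (hH : ∀ (Z : Finset X) (g : X → H), ∑ x ∈ Z, g x = 0 →
      ∑ x ∈ Z, ∑ y ∈ Z, K x y * inner ℝ (g x) (g y) ≤ μ * ∑ x ∈ Z, ‖g x‖ ^ 2)
    (Y : Finset X) (hY : Y.Nonempty) (hμY : μ ≤ Y.card / (4 * N))
    (f : X → H) (M : ℝ) (hM0 : 0 ≤ M)
    (hM : ∀ x ∈ Y, ∀ y ∈ Y, K x y ≠ 0 → ‖f x - f y‖ ^ 2 ≤ M) :
    ∃ Z ⊆ Y, 3 / 4 * (Y.card : ℝ) ≤ Z.card ∧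
      ∑ x ∈ Z, ∑ y ∈ Z, ‖f x - f y‖ ^ 2 ≤ 16 / 3 * M * (Z.card : ℝ) ^ 2 := by
  set e : Finset X → ℝ := fun Z => ∑ x ∈ Z, ∑ y ∈ Z, K x y with he
  obtain ⟨Z, hZmem, hZmax⟩ := Finset.exists_max_image (Y.powerset.filter (fun Z => Z.Nonempty))
    (fun Z => e Z / Z.card) ⟨Y, by simp [hY]⟩
  simp only [Finset.mem_filter, Finset.mem_powerset] at hZmem hZmax
  obtain ⟨hZY, hZne⟩ := hZmem
  have hy : (0 : ℝ) < Y.card := by exact_mod_cast hY.card_pos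
  have hz : (0 : ℝ) < Z.card := by exact_mod_cast hZne.card_pos
  have hzy : (Z.card : ℝ) ≤ Y.card := by exact_mod_cast Finset.card_le_card hZY
  set y : ℝ := (Y.card : ℝ) with hydef
  set z : ℝ := (Z.card : ℝ) with hzdef
  set r := e Z / z with hr
  have heZ : e Z = r * z := by rw [hr]; field_simp
  have hW : ∀ W ⊆ Y, e W ≤ r * W.card := by
    intro W hWY
    rcases W.eq_empty_or_nonempty with rfl | hne
    · simp [he]
    · have h := hZmax W ⟨hWY, hne⟩
      have hw : (0 : ℝ) < W.card := by exact_mod_cast hne.card_pos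
      exact (div_le_iff₀ hw).mp h
  have hry : y / N ≤ r := by
    have h1 := hW Y subset_rfl
    have h2 := hlow Y
    have h3 : y ^ 2 / N ≤ r * y := h2.trans h1
    have h4 : y / N * y ≤ r * y := by
      calc y / N * y = y ^ 2 / N := by ring
        _ ≤ _ := h3
    exact le_of_mul_le_mul_right h4 hy
  have hdeg : ∀ x ∈ Z, r ≤ 2 * ∑ y ∈ Z, K x y := by
    intro x hx
    have h1 := hW (Z.erase x) ((Finset.erase_subset _ _).trans hZY)
    have hc : ((Z.erase x).card : ℝ) = z - 1 := by
      rw [Finset.card_erase_of_mem hx, Nat.cast_sub hZne.card_pos, Nat.cast_one]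
    have h2 : e Z = K x x + 2 * ∑ y ∈ Z.erase x, K x y + e (Z.erase x) := by
      simp only [he]
      rw [← Finset.add_sum_erase Z _ hx]
      rw [← Finset.add_sum_erase Z (fun y => K x y) hx]
      have : ∀ w ∈ Z.erase x, ∑ y ∈ Z, K w y = K x w + ∑ y ∈ Z.erase x, K w y := by
        intro w _
        rw [← Finset.add_sum_erase Z (fun y => K w y) hx, hKs w x]
      rw [Finset.sum_congr rfl this, Finset.sum_add_distrib]
      ring
    rw [← Finset.add_sum_erase Z (fun y => K x y) hx]
    have h3 := hK0 x x
    rw [hc] at h1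
    nlinarith
  have hupZ : e Z ≤ z ^ 2 / N + μ * z := hup Z
  have hyN : 0 < y / N := div_pos hy hN
  have hμ4 : μ ≤ y / N / 4 := by
    calc μ ≤ y / (4 * N) := hμY
      _ = y / N / 4 := by field_simp
  have hzz : 3 / 4 * y ≤ z := by
    have h1 : r * z ≤ (z / N + μ) * z := by
      rw [← heZ]; calc e Z ≤ _ := hupZ
        _ = _ := by ring
    have h2 : r ≤ z / N + μ := le_of_mul_le_mul_right h1 hz
    have h3 : (3 / 4 * y) / N ≤ z / N := by
      have : (3 / 4 * y) / N = 3 / 4 * (y / N) := by ring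
      rw [this]; linarith
    exact (div_le_div_iff_of_pos_right hN).mp h3
  refine ⟨Z, hZY, hzz, ?_⟩
  set mean : H := (1 / z) • ∑ x ∈ Z, f x with hmean
  set g : X → H := fun x => f x - mean with hg
  have hg0 : ∑ x ∈ Z, g x = 0 := by
    simp only [hg, Finset.sum_sub_distrib, Finset.sum_const, hmean]
    rw [← Nat.cast_smul_eq_nsmul ℝ, smul_smul, ← hzdef]
    rw [mul_one_div_cancel hz.ne', one_smul, sub_self]
  have hfg : ∀ x y, ‖f x - f y‖ ^ 2 = ‖g x‖ ^ 2 - 2 * inner ℝ (g x) (g y) + ‖g y‖ ^ 2 := by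
    intro x y
    rw [← norm_sub_sq_real]
    simp [hg]
  set G := ∑ x ∈ Z, ‖g x‖ ^ 2 with hG
  have hG0 : 0 ≤ G := Finset.sum_nonneg fun _ _ => sq_nonneg _
  have hZZ : ∑ x ∈ Z, ∑ y ∈ Z, ‖f x - f y‖ ^ 2 = 2 * z * G := by
    simp only [hfg, Finset.sum_add_distrib, Finset.sum_sub_distrib, Finset.sum_const,
      ← Finset.mul_sum, ← inner_sum, hg0, inner_zero_right, nsmul_eq_mul]
    simp [← hG, ← hzdef]; ring
  have hlhs : ∑ x ∈ Z, ∑ y ∈ Z, K x y * ‖f x - f y‖ ^ 2 ≤ M * e Z := by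
    simp only [he]
    rw [Finset.mul_sum]
    refine Finset.sum_le_sum fun x hx => ?_
    rw [Finset.mul_sum]
    refine Finset.sum_le_sum fun y hy => ?_
    by_cases h : K x y = 0
    · simp [h]
    · rw [mul_comm]
      exact mul_le_mul_of_nonneg_right (hM x (hZY hx) y (hZY hy) h) (hK0 x y)
  have hrhs : ∑ x ∈ Z, ∑ y ∈ Z, K x y * ‖f x - f y‖ ^ 2 =
      ∑ x ∈ Z, (2 * ∑ y ∈ Z, K x y) * ‖g x‖ ^ 2
        - 2 * ∑ x ∈ Z, ∑ y ∈ Z, K x y * inner ℝ (g x) (g y) := by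
    have a1 : ∑ x ∈ Z, ∑ y ∈ Z, K x y * ‖f x - f y‖ ^ 2 =
        ∑ x ∈ Z, ∑ y ∈ Z, K x y * ‖g x‖ ^ 2 + ∑ x ∈ Z, ∑ y ∈ Z, K x y * ‖g y‖ ^ 2
        - 2 * ∑ x ∈ Z, ∑ y ∈ Z, K x y * inner ℝ (g x) (g y) := by
      simp only [Finset.mul_sum, ← Finset.sum_add_distrib, ← Finset.sum_sub_distrib]
      refine Finset.sum_congr rfl fun x _ => Finset.sum_congr rfl fun y _ => ?_
      rw [hfg]; ring
    have a2 : ∑ x ∈ Z, ∑ y ∈ Z, K x y * ‖g y‖ ^ 2 = ∑ x ∈ Z, ∑ y ∈ Z, K x y * ‖g x‖ ^ 2 := by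
      rw [Finset.sum_comm]
      refine Finset.sum_congr rfl fun x _ => Finset.sum_congr rfl fun y _ => ?_
      rw [hKs]
    rw [a1, a2]
    congr 1
    rw [← Finset.sum_add_distrib]
    refine Finset.sum_congr rfl fun x _ => ?_
    rw [← Finset.sum_mul]; ring
  have hmain : (r - 2 * μ) * G ≤ M * e Z := by
    have b1 := hH Z g hg0
    have b2 : r * G ≤ ∑ x ∈ Z, (2 * ∑ y ∈ Z, K x y) * ‖g x‖ ^ 2 := by
      rw [hG, Finset.mul_sum]
      exact Finset.sum_le_sum fun x hx => mul_le_mul_of_nonneg_right (hdeg x hx) (sq_nonneg _)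
    rw [hrhs] at hlhs
    linarith
  have h1 : y / N / 2 * G ≤ (r - 2 * μ) * G := by
    apply mul_le_mul_of_nonneg_right _ hG0; linarith
  have h2 : e Z ≤ 4 / 3 * z ^ 2 / N := by
    have : μ * z ≤ (z / N / 3) * z := by
      apply mul_le_mul_of_nonneg_right _ hz.le
      have : y / N / 4 ≤ z / N / 3 := by
        have h : (y / 4) / N ≤ (z / 3) / N :=
          div_le_div_of_nonneg_right (by linarith) hN.le
        calc y / N / 4 = (y / 4) / N := by ring
          _ ≤ _ := h
          _ = _ := by ring
      linarith
    calc e Z ≤ _ := hupZ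
      _ ≤ z ^ 2 / N + (z / N / 3) * z := by linarith
      _ = _ := by ring
  have h3 : y / N / 2 * G ≤ M * (4 / 3 * z ^ 2 / N) :=
    (h1.trans hmain).trans (mul_le_mul_of_nonneg_left h2 hM0)
  have h4 : y * G ≤ 8 / 3 * M * z ^ 2 := by
    have : y / N / 2 * G * (2 * N) ≤ M * (4 / 3 * z ^ 2 / N) * (2 * N) := by gcongr
    have e1 : y / N / 2 * G * (2 * N) = y * G := by field_simp
    have e2 : M * (4 / 3 * z ^ 2 / N) * (2 * N) = 8 / 3 * M * z ^ 2 := by field_simp; ring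
    rwa [e1, e2] at this
  rw [hZZ]
  have h5 : z * G ≤ y * G := mul_le_mul_of_nonneg_right hzy hG0
  linarith

noncomputable def wl {k m : ℕ} (s : Fin m → V k) (v : V k) : ℕ :=
  sInf {t : ℕ | Reach s t v ∨ t = m + 1}

lemma wl_le_top {k m : ℕ} (s : Fin m → V k) (v : V k) : wl s v ≤ m + 1 :=
  Nat.sInf_le (Or.inr rfl)

lemma wl_le {k m : ℕ} {s : Fin m → V k} {v : V k} {t : ℕ} (h : Reach s t v) : wl s v ≤ t :=
  Nat.sInf_le (Or.inl h)

lemma wl_spec {k m : ℕ} (s : Fin m → V k) (v : V k) : Reach s (wl s v) v ∨ wl s v = m + 1 :=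
  Nat.sInf_mem (s := {t : ℕ | Reach s t v ∨ t = m + 1}) ⟨m + 1, Or.inr rfl⟩

lemma wl_zero {k m : ℕ} (s : Fin m → V k) : wl s 0 = 0 :=
  Nat.le_zero.mp (wl_le (reach_zero s))

lemma wl_pos {k m : ℕ} (s : Fin m → V k) (v : V k) (hv : v ≠ 0) : 0 < wl s v := by
  by_contra hc
  have h0 : wl s v = 0 := by omega
  rcases wl_spec s v with h | h
  · rw [h0] at h; exact hv (reach_zero_eq h)
  · omega

lemma wl_add {k m : ℕ} (s : Fin m → V k) (u v : V k) : wl s (u + v) ≤ wl s u + wl s v := by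
  have h0 := wl_le_top s (u + v)
  rcases wl_spec s u with h | h
  · rcases wl_spec s v with h' | h'
    · exact wl_le (reach_add h h')
    · omega
  · omega

/-- Size of the balls. -/
lemma ball_card {k : ℕ} (s : Fin (8 * k) → V k) :
    ((Finset.univ.filter (fun v : V k => 24 * wl s v ≤ k)).card : ℝ) ^ 2 ≤ 2 ^ k := by
  classical
  set r := k / 24 with hr
  set A := Finset.univ.filter (fun c : Fin (8 * k) → ZMod 2 => hammingNorm c ≤ r) with hA
  have h1 : (Finset.univ.filter (fun v : V k => 24 * wl s v ≤ k)).card ≤ A.card := by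
    refine le_trans (Finset.card_le_card ?_)
      (Finset.card_image_le (s := A) (f := fun c => ∑ i, c i • s i))
    intro v hv
    simp only [Finset.mem_filter, Finset.mem_univ, true_and] at hv
    rcases wl_spec s v with h | h
    · obtain ⟨c, hc, hcv⟩ := h
      simp only [Finset.mem_image, hA, Finset.mem_filter, Finset.mem_univ, true_and]
      exact ⟨c, by omega, hcv⟩
    · omega
  have h2 : ∑ c : Fin (8 * k) → ZMod 2, ((1 : ℝ) / 64) ^ hammingNorm c = (65 / 64) ^ (8 * k) := by
    have e : ∀ c : Fin (8 * k) → ZMod 2, ((1 : ℝ) / 64) ^ hammingNorm c =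
        ∏ i, (if c i ≠ 0 then (1 : ℝ) / 64 else 1) := by
      intro c
      rw [Finset.prod_ite]; simp [hammingNorm]
    simp_rw [e]
    have h := Finset.prod_univ_sum (fun _ : Fin (8 * k) => (Finset.univ : Finset (ZMod 2)))
      (fun _ a => if a ≠ 0 then (1 : ℝ) / 64 else 1)
    simp only [Fintype.piFinset_univ] at h
    rw [← h]
    have h2 : (Finset.univ : Finset (ZMod 2)) = {0, 1} := by decide
    rw [h2, Finset.sum_pair (by decide)]
    simp; norm_num
  have h3 : (A.card : ℝ) * (1 / 64) ^ r ≤ (65 / 64) ^ (8 * k) := by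
    rw [← h2, ← nsmul_eq_mul]
    refine le_trans (Finset.card_nsmul_le_sum A (fun c => ((1 : ℝ) / 64) ^ hammingNorm c) _ ?_)
      (Finset.sum_le_sum_of_subset_of_nonneg (Finset.subset_univ _) fun _ _ _ => by positivity)
    intro c hc
    exact pow_le_pow_of_le_one (by norm_num) (by norm_num) (by simpa [hA] using hc)
  have h4 : (A.card : ℝ) ≤ (65 / 64) ^ (8 * k) * 64 ^ r := by
    rw [one_div, inv_pow, ← div_eq_mul_inv, div_le_iff₀ (by positivity)] at h3
    exact h3
  have h5 : (A.card : ℝ) ^ 4 ≤ (2 ^ k) ^ 2 := by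
    calc (A.card : ℝ) ^ 4 ≤ ((65 / 64) ^ (8 * k) * 64 ^ r) ^ 4 := by gcongr
      _ = ((65 / 64) ^ 32) ^ k * 2 ^ (24 * r) := by
        rw [mul_pow, ← pow_mul, ← pow_mul, ← pow_mul,
          show (64 : ℝ) = 2 ^ 6 by norm_num, ← pow_mul]
        congr 2 <;> ring
      _ ≤ 2 ^ k * 2 ^ k := by
        have : 24 * r ≤ k := by omega
        gcongr
        · norm_num
        · norm_num
      _ = _ := by ring
  have h6 : (A.card : ℝ) ^ 2 ≤ 2 ^ k := by
    have : ((A.card : ℝ) ^ 2) ^ 2 ≤ (2 ^ k) ^ 2 := by rw [← pow_mul]; exact h5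
    exact (pow_le_pow_iff_left₀ (by positivity) (by positivity) (by norm_num)).mp this
  refine le_trans ?_ h6
  have : ((Finset.univ.filter (fun v : V k => 24 * wl s v ≤ k)).card : ℝ) ≤ A.card := by
    exact_mod_cast h1
  gcongr

/-- The core bound on the whole group. -/
lemma core {H : Type*} [NormedAddCommGroup H] [InnerProductSpace ℝ H] {k : ℕ} (hk : 1 ≤ k)
    (s : Fin (8 * k) → V k)
    (hs : ∀ u : V k, u ≠ 0 → ∑ i, chi u (s i) ≤ 4 * k)
    (α : ℝ) (hα : 2 < α) (Y : Finset (V k)) (f : V k → H) (σ : ℝ) (hσ : 0 < σ)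
    (hf : ∀ x ∈ Y, ∀ y ∈ Y, σ * wl s (x + y) ≤ ‖f x - f y‖ ∧
      ‖f x - f y‖ ≤ α * σ * wl s (x + y)) :
    (Y.card : ℝ) ≤ 16 / 3 * ((2 : ℝ) ^ k) ^ (1 - (1 / 384) / α) := by
  classical
  have hk0 : (0 : ℝ) < k := by exact_mod_cast hk
  have hlam : ∀ u : V k, u ≠ 0 → lam s u ≤ 3 / 4 := by
    intro u hu
    have h := hs u hu
    unfold lam
    rw [Finset.sum_add_distrib]
    simp only [Finset.sum_const, Finset.card_univ, Fintype.card_fin, nsmul_eq_mul, mul_one]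
    push_cast
    rw [one_div, inv_mul_le_iff₀ (by positivity)]
    linarith
  have hm : 0 < 8 * k := by omega
  set t : ℕ := ⌊(k : ℝ) / 24 / (4 * α)⌋₊ with ht
  have ht1 : (t : ℝ) ≤ (k : ℝ) / 24 / (4 * α) := Nat.floor_le (by positivity)
  have ht2 : (k : ℝ) / 24 / (4 * α) < t + 1 := Nat.lt_floor_add_one _
  set N : ℝ := 2 ^ k with hN
  have hN0 : 0 < N := by positivity
  have hN1 : 1 ≤ N := one_le_pow₀ (by norm_num)
  have hexp : (1 / 384 : ℝ) / α ≤ 1 / 2 := by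
    rw [div_le_iff₀ (by linarith)]; linarith
  by_contra hcon
  push Not at hcon
  have hYpos : (0 : ℝ) < Y.card := lt_trans (by positivity) hcon
  have hYne : Y.Nonempty := Finset.card_pos.mp (by exact_mod_cast hYpos)
  have hsqrt : 16 / 3 * Real.sqrt N ≤ 16 / 3 * N ^ (1 - (1 / 384) / α) := by
    rw [Real.sqrt_eq_rpow]
    gcongr
    linarith
  have hpow : ((3 : ℝ) / 4) ^ t ≤ 4 / 3 * N ^ (-((1 / 384) / α)) := by
    have e1 : ((3 : ℝ) / 4) ^ t = 4 / 3 * (3 / 4 : ℝ) ^ ((t : ℝ) + 1) := by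
      rw [Real.rpow_add (by norm_num), Real.rpow_natCast, Real.rpow_one]; ring
    rw [e1]
    gcongr
    calc (3 / 4 : ℝ) ^ ((t : ℝ) + 1) ≤ (3 / 4 : ℝ) ^ ((k : ℝ) / 24 / (4 * α)) :=
          Real.rpow_le_rpow_of_exponent_ge (by norm_num) (by norm_num) ht2.le
      _ = ((3 / 4 : ℝ) ^ (4 : ℝ)) ^ ((k : ℝ) * ((1 / 384) / α)) := by
          rw [← Real.rpow_mul (by norm_num)]
          congr 1
          field_simp
          norm_num
      _ ≤ (1 / 2 : ℝ) ^ ((k : ℝ) * ((1 / 384) / α)) := by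
          gcongr
          rw [show (4 : ℝ) = ((4 : ℕ) : ℝ) by norm_num, Real.rpow_natCast]; norm_num
      _ = N ^ (-((1 / 384) / α)) := by
          rw [hN, ← Real.rpow_natCast, ← Real.rpow_mul (by norm_num), one_div,
            Real.inv_rpow (by norm_num), ← Real.rpow_neg (by norm_num)]
          congr 1
          ring
  have hμY : ((3 : ℝ) / 4) ^ t ≤ Y.card / (4 * N) := by
    rw [le_div_iff₀ (by positivity)]
    calc ((3 : ℝ) / 4) ^ t * (4 * N) ≤ 4 / 3 * N ^ (-((1 / 384) / α)) * (4 * N) := by gcongr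
      _ = 16 / 3 * N ^ (1 - (1 / 384) / α) := by
        rw [sub_eq_add_neg, Real.rpow_add hN0, Real.rpow_one]; ring
      _ ≤ _ := hcon.le
  have hind : ∀ (Z : Finset (V k)) , ∑ x ∈ Z, ∑ y ∈ Z, aker s t (x + y) =
      ∑ x, ∑ y, aker s t (x + y) * inner ℝ (if x ∈ Z then (1 : ℝ) else 0)
        (if y ∈ Z then (1 : ℝ) else 0) := by
    intro Z
    rw [← Finset.sum_filter_add_sum_filter_not Finset.univ (fun x => x ∈ Z)]
    rw [Finset.sum_eq_zero (s := Finset.univ.filter (fun x => x ∉ Z))]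
    · rw [add_zero, Finset.filter_mem_eq_inter, Finset.univ_inter]
      refine Finset.sum_congr rfl fun x hx => ?_
      simp [hx]
    · intro x hx
      simp at hx
      simp [hx]
  obtain ⟨Z, hZY, hZc, hZs⟩ := poincare_subset (H := H) (fun x y => aker s t (x + y))
    (fun x y => aker_nonneg s t _) (fun x y => by rw [add_comm]) N ((3 / 4) ^ t) hN0
    (by positivity)
    (by
      intro Z
      rw [hind]
      refine le_trans (le_of_eq ?_) (quad_lower hm s t _)
      simp [hN]; ring)
    (by
      intro Z
      rw [hind]
      refine le_trans (quad_upper hm s t _ (3 / 4) (by norm_num) hlam) (le_of_eq ?_)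
      have : ∀ x, ‖(if x ∈ Z then (1 : ℝ) else 0)‖ ^ 2 = if x ∈ Z then (1 : ℝ) else 0 := by
        intro x; split_ifs <;> simp
      simp_rw [this]
      simp [hN]; ring)
    (by
      intro Z g hg
      have h := quad_upper hm s t (fun x => if x ∈ Z then g x else 0) (3 / 4) (by norm_num) hlam
      have h0 : ∑ x, (if x ∈ Z then g x else 0) = 0 := by
        have h00 : ∑ x, (if x ∈ Z then g x else 0) = ∑ x ∈ Z, g x := by simp
        rw [h00, hg]
      have h1 : ∑ x, ‖(if x ∈ Z then g x else 0)‖ ^ 2 = ∑ x ∈ Z, ‖g x‖ ^ 2 := by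
        have : ∀ x, ‖(if x ∈ Z then g x else 0)‖ ^ 2 = if x ∈ Z then ‖g x‖ ^ 2 else 0 := by
          intro x; split_ifs <;> simp
        simp_rw [this]; simp
      rw [h0, h1] at h
      simp only [norm_zero] at h
      have h2 : ∑ x, ∑ y, aker s t (x + y) * inner ℝ (if x ∈ Z then g x else 0)
          (if y ∈ Z then g y else 0) = ∑ x ∈ Z, ∑ y ∈ Z, aker s t (x + y) * inner ℝ (g x) (g y) := by
        have : ∀ x y, aker s t (x + y) * inner ℝ (if x ∈ Z then g x else 0)
          (if y ∈ Z then g y else 0) = if x ∈ Z then (if y ∈ Z then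
            aker s t (x + y) * inner ℝ (g x) (g y) else 0) else 0 := by
          intro x y; split_ifs <;> simp
        simp_rw [this]
        rw [← Finset.sum_filter_add_sum_filter_not Finset.univ (fun x => x ∈ Z)]
        rw [Finset.sum_eq_zero (s := Finset.univ.filter (fun x => x ∉ Z))]
        · rw [add_zero, Finset.filter_mem_eq_inter, Finset.univ_inter]
          refine Finset.sum_congr rfl fun x hx => ?_
          simp [hx]
        · intro x hx
          simp at hx
          simp [hx]
      rw [h2] at h
      simpa using h)
    Y hYne hμY f ((α * σ * t) ^ 2) (by positivity)
    (by
      intro x hx y hy hxy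
      have h1 := (hf x hx y hy).2
      have h2 : (wl s (x + y) : ℝ) ≤ t := by exact_mod_cast wl_le (aker_supp s t _ hxy)
      have h3 : ‖f x - f y‖ ≤ α * σ * t := h1.trans (by gcongr)
      gcongr)
  set z : ℝ := (Z.card : ℝ) with hz
  have hz0 : 0 < z := by linarith
  set B := Finset.univ.filter (fun v : V k => 24 * wl s v ≤ k) with hB
  have hBc : (B.card : ℝ) ≤ Real.sqrt N := Real.le_sqrt_of_sq_le (ball_card s)
  have hzB : 2 * (B.card : ℝ) ≤ z := by linarith [Real.sqrt_nonneg N]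
  have hrow : ∀ x ∈ Z, σ ^ 2 * (k / 24 : ℝ) ^ 2 * (z / 2) ≤ ∑ y ∈ Z, ‖f x - f y‖ ^ 2 := by
    intro x hx
    set F := Z.filter (fun y => ¬ (24 * wl s (x + y) ≤ k)) with hF
    have hFc : z / 2 ≤ (F.card : ℝ) := by
      have h1 : (Z.filter (fun y => 24 * wl s (x + y) ≤ k)).card ≤ B.card := by
        apply Finset.card_le_card_of_injOn (fun y => x + y)
        · intro y hy
          simp at hy
          simp [hB, hy]
        · intro a _ b _ hab
          simpa using hab
      have h2 := Finset.card_filter_add_card_filter_not (s := Z) (fun y => 24 * wl s (x + y) ≤ k)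
      have h3 : ((Z.filter (fun y => 24 * wl s (x + y) ≤ k)).card : ℝ) + F.card = z := by
        rw [hz, ← h2]; push_cast; rfl
      have h4 : ((Z.filter (fun y => 24 * wl s (x + y) ≤ k)).card : ℝ) ≤ B.card := by
        exact_mod_cast h1
      linarith
    calc σ ^ 2 * (k / 24 : ℝ) ^ 2 * (z / 2) ≤ F.card * (σ ^ 2 * (k / 24 : ℝ) ^ 2) := by
          rw [mul_comm]; gcongr
      _ ≤ ∑ y ∈ F, ‖f x - f y‖ ^ 2 := by
          rw [← nsmul_eq_mul]
          apply Finset.card_nsmul_le_sum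
          intro y hy
          simp only [hF, Finset.mem_filter, not_le] at hy
          have h1 := (hf x (hZY hx) y (hZY hy.1)).1
          have h2 : (k : ℝ) ≤ 24 * wl s (x + y) := by exact_mod_cast hy.2.le
          have h3 : (k / 24 : ℝ) ≤ wl s (x + y) := by linarith
          rw [← mul_pow]
          have h4 : σ * (k / 24 : ℝ) ≤ ‖f x - f y‖ := le_trans (by gcongr) h1
          gcongr
      _ ≤ _ := Finset.sum_le_sum_of_subset_of_nonneg (Finset.filter_subset _ _)
          fun _ _ _ => sq_nonneg _
  have htot : z * (σ ^ 2 * (k / 24 : ℝ) ^ 2 * (z / 2)) ≤ 16 / 3 * (α * σ * t) ^ 2 * z ^ 2 := by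
    refine le_trans ?_ hZs
    rw [hz, ← nsmul_eq_mul]
    exact Finset.card_nsmul_le_sum _ _ _ hrow
  have hαt : α * t ≤ k / 24 / 4 := by
    calc α * t ≤ α * ((k : ℝ) / 24 / (4 * α)) := by gcongr
      _ = _ := by field_simp
  have h6 : (α * σ * t) ^ 2 ≤ σ ^ 2 * (k / 24 / 4 : ℝ) ^ 2 := by
    rw [show α * σ * t = σ * (α * t) by ring, mul_pow]
    gcongr
  have h7 : 0 < z ^ 2 * σ ^ 2 * (k / 24 : ℝ) ^ 2 := by positivity
  have h8 : 16 / 3 * (α * σ * t) ^ 2 * z ^ 2 ≤ 16 / 3 * (σ ^ 2 * (k / 24 / 4 : ℝ) ^ 2) * z ^ 2 := by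
    gcongr
  nlinarith

end RUB

/-- Near tightness of the metric Ramsey theorem: for every `α > 2` there is an
`n`-point metric space all of whose subsets that `α`-embed into `ℓ₂` have at most
`C·n^(1-c/α)` points. -/
theorem ramsey_upper_bound_l2 :
    ∃ c C : ℝ, 0 < c ∧ 0 < C ∧
      ∀ (α : ℝ), 2 < α → ∀ n : ℕ, 1 ≤ n →
        ∃ d : Fin n → Fin n → ℝ, IsMetricOn d ∧
          ∀ Y : Finset (Fin n),
            (∃ f : Fin n → lp (fun _ : ℕ => ℝ) 2, ∃ s : ℝ, 0 < s ∧
              ∀ x ∈ Y, ∀ y ∈ Y,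
                s * d x y ≤ ‖f x - f y‖ ∧ ‖f x - f y‖ ≤ α * s * d x y) →
            (Y.card : ℝ) ≤ C * (n : ℝ) ^ (1 - c / α) := by
  classical
  refine ⟨1 / 384, 11, by norm_num, by norm_num, fun α hα n hn => ?_⟩
  set k := Nat.log 2 n + 1 with hk
  obtain ⟨g, hg⟩ := RUB.exists_gen k
  have hn2 : n ≤ 2 ^ k := (Nat.lt_pow_succ_log_self (by norm_num) n).le
  have h2n : 2 ^ k ≤ 2 * n := by
    rw [hk, pow_succ, mul_comm]
    exact Nat.mul_le_mul_left 2 (Nat.pow_log_le_self 2 (by omega))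
  obtain ⟨φ⟩ : Nonempty (Fin n ↪ RUB.V k) := by
    apply Function.Embedding.nonempty_of_card_le
    rw [RUB.card_V]; simpa using hn2
  have hne : ∀ x y, x ≠ y → φ x + φ y ≠ 0 := by
    intro x y hxy h
    apply hxy
    apply φ.injective
    have : φ x + (φ x + φ y) = φ x + 0 := by rw [h]
    rw [← add_assoc, RUB.V_add_self, zero_add, add_zero] at this
    exact this.symm
  refine ⟨fun x y => (RUB.wl g (φ x + φ y) : ℝ), ⟨?_, ?_, ?_, ?_⟩, ?_⟩
  · intro x; simp [RUB.V_add_self, RUB.wl_zero]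
  · intro x y hxy
    beta_reduce
    exact_mod_cast RUB.wl_pos g _ (hne x y hxy)
  · intro x y; simp [add_comm]
  · intro x y z
    have h := RUB.wl_add g (φ x + φ y) (φ y + φ z)
    have e : φ x + φ y + (φ y + φ z) = φ x + φ z := by
      rw [add_assoc, ← add_assoc (φ y), RUB.V_add_self, zero_add]
    rw [e] at h
    beta_reduce
    exact_mod_cast h
  · rintro Y ⟨f, s, hs, hf⟩
    have : Nonempty (Fin n) := ⟨⟨0, hn⟩⟩
    have hinv : ∀ x, Function.invFun φ (φ x) = x := Function.leftInverse_invFun φ.injective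
    have h := RUB.core (by omega) g hg α hα (Y.map φ) (fun v => f (Function.invFun φ v)) s hs
      (by
        intro x hx y hy
        obtain ⟨a, ha, rfl⟩ := Finset.mem_map.mp hx
        obtain ⟨b, hb, rfl⟩ := Finset.mem_map.mp hy
        simp only [hinv]
        exact hf a ha b hb)
    rw [Finset.card_map] at h
    have hexp : (1 / 384 : ℝ) / α ≤ 1 / 2 := by
      rw [div_le_iff₀ (by linarith)]; linarith
    have hexp0 : 0 ≤ (1 / 384 : ℝ) / α := by positivity
    have hc : ((2 : ℝ) ^ k) ≤ 2 * n := by exact_mod_cast h2n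
    calc (Y.card : ℝ) ≤ _ := h
      _ ≤ 16 / 3 * (2 * n : ℝ) ^ (1 - (1 / 384) / α) := by
        gcongr
        linarith
      _ = 16 / 3 * (2 : ℝ) ^ (1 - (1 / 384) / α) * (n : ℝ) ^ (1 - (1 / 384) / α) := by
        rw [Real.mul_rpow (by norm_num) (by positivity)]; ring
      _ ≤ 11 * (n : ℝ) ^ (1 - (1 / 384) / α) := by
        gcongr
        have : (2 : ℝ) ^ (1 - (1 / 384) / α) ≤ 2 ^ (1 : ℝ) :=
          Real.rpow_le_rpow_of_exponent_le (by norm_num) (by linarith)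
        rw [Real.rpow_one] at this
        linarith
end

section
/- There exist universal constants c, C > 0 with the following property. Let X be a real normed space of finite dimension h ≥ 1 and let n ≥ 2 be an integer. (i) For every real α with 1 < α < 2, there exists a metric space M on n points such that every subset of M admitting an α-embedding into X has at most 2·log₂ n + 2h·log₂(C/(2−α)) points. (ii) For every real α ≥ 2, there exists a metric space M on n points such that every subset of M admitting an α-embedding into X has at most C·n^(1 − c/α)·h·log α points. -/
open MeasureTheory Metric in
lemma sep_card {E : Type} [NormedAddCommGroup E] [NormedSpace ℝ E] [FiniteDimensional ℝ E]
    (R δ : ℝ) (hR : 0 ≤ R) (hδ : 0 < δ) (s : Finset E) (hs : ∀ c ∈ s, ‖c‖ ≤ R)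
    (h : ∀ c ∈ s, ∀ d ∈ s, c ≠ d → δ ≤ ‖c - d‖) :
    (s.card : ℝ) ≤ (1 + 2 * R / δ) ^ Module.finrank ℝ E := by
  borelize E
  let μ : Measure E := Measure.addHaar
  have hε : 0 < δ / 2 := by positivity
  have ρpos : 0 < R + δ / 2 := by positivity
  have D : Set.Pairwise (s : Set E) (Function.onFun Disjoint fun c => ball (c : E) (δ / 2)) := by
    rintro c hc d hd hcd
    apply ball_disjoint_ball
    rw [dist_eq_norm]
    linarith [h c hc d hd hcd]
  have A_subset : (⋃ c ∈ s, ball (c : E) (δ / 2)) ⊆ ball (0 : E) (R + δ / 2) := by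
    refine Set.iUnion₂_subset fun x hx => ?_
    apply ball_subset_ball'
    rw [dist_zero_right]
    linarith [hs x hx]
  have I :
    (s.card : ENNReal) * ENNReal.ofReal ((δ / 2) ^ Module.finrank ℝ E) * μ (ball 0 1) ≤
      ENNReal.ofReal ((R + δ / 2) ^ Module.finrank ℝ E) * μ (ball 0 1) :=
    calc
      _ = μ (⋃ c ∈ s, ball (c : E) (δ / 2)) := by
        rw [measure_biUnion_finset D fun c _ => measurableSet_ball]
        simp only [μ.addHaar_ball_of_pos _ hε]
        simp only [Finset.sum_const, nsmul_eq_mul, mul_assoc]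
      _ ≤ μ (ball (0 : E) (R + δ / 2)) := measure_mono A_subset
      _ = _ := by
        simp only [μ.addHaar_ball_of_pos _ ρpos]
  have J : (s.card : ENNReal) * ENNReal.ofReal ((δ / 2) ^ Module.finrank ℝ E) ≤
      ENNReal.ofReal ((R + δ / 2) ^ Module.finrank ℝ E) :=
    (ENNReal.mul_le_mul_iff_left (measure_ball_pos _ _ zero_lt_one).ne' measure_ball_lt_top.ne).1 I
  have K := ENNReal.toReal_le_of_le_ofReal (pow_nonneg ρpos.le _) J
  rw [ENNReal.toReal_mul, ENNReal.toReal_ofReal (by positivity)] at K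
  have e : (1 + 2 * R / δ) = (R + δ / 2) / (δ / 2) := by field_simp; ring
  rw [e, div_pow, le_div_iff₀ (by positivity)]
  simpa using K

lemma exists_net {E : Type} [NormedAddCommGroup E] [NormedSpace ℝ E] [FiniteDimensional ℝ E]
    (R δ : ℝ) (hR : 0 ≤ R) (hδ : 0 < δ) :
    ∃ S : Finset E, (S.card : ℝ) ≤ (1 + 2 * R / δ) ^ Module.finrank ℝ E ∧
      ∀ x : E, ‖x‖ ≤ R → ∃ y ∈ S, ‖x - y‖ ≤ δ := by
  classical
  let P : ℕ → Prop := fun k => ∃ s : Finset E, s.card = k ∧ (∀ c ∈ s, ‖c‖ ≤ R) ∧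
    (∀ c ∈ s, ∀ d ∈ s, c ≠ d → δ ≤ ‖c - d‖)
  let b := ⌊(1 + 2 * R / δ) ^ Module.finrank ℝ E⌋₊
  have hb : ∀ k, P k → k ≤ b := by
    rintro k ⟨s, rfl, h1, h2⟩
    exact Nat.le_floor (sep_card R δ hR hδ s h1 h2)
  have h0 : P 0 := ⟨∅, by simp⟩
  have hm : P (Nat.findGreatest P b) := Nat.findGreatest_spec (Nat.zero_le b) h0
  obtain ⟨s, hs, h1, h2⟩ := hm
  refine ⟨s, sep_card R δ hR hδ s h1 h2, ?_⟩
  intro x hx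
  by_contra! hcon
  have hxs : x ∉ s := fun hh => by
    have := hcon x hh
    simp at this; linarith
  have hP : P (s.card + 1) := by
    refine ⟨insert x s, Finset.card_insert_of_notMem hxs, ?_, ?_⟩
    · intro c hc
      rcases Finset.mem_insert.1 hc with rfl | hc
      · exact hx
      · exact h1 c hc
    · intro c hc d hd hcd
      rcases Finset.mem_insert.1 hc with hc | hc <;> rcases Finset.mem_insert.1 hd with hd | hd
      · exact absurd (hc.trans hd.symm) hcd
      · rw [hc]; exact (hcon d hd).le
      · rw [hd, norm_sub_rev]; exact (hcon c hc).le
      · exact h2 c hc d hd hcd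
  have := Nat.le_findGreatest (hb _ hP) hP
  omega

/-- rounding an embedding to a net -/
lemma rounding {E : Type} [NormedAddCommGroup E] [NormedSpace ℝ E] {n : ℕ}
    (R δ : ℝ) (S : Finset E) (hS : ∀ x : E, ‖x‖ ≤ R → ∃ y ∈ S, ‖x - y‖ ≤ δ)
    (d : Fin n → Fin n → ℝ) (Y : Finset (Fin n)) (f : Fin n → E) (s α : ℝ) (hs : 0 < s)
    (hd : ∀ x y, α * d x y ≤ R)
    (hf : ∀ x ∈ Y, ∀ y ∈ Y, s * d x y ≤ ‖f x - f y‖ ∧ ‖f x - f y‖ ≤ α * s * d x y) :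
    ∃ φ : Y → S, ∀ x y : Y, d x y ≤ ‖(φ x : E) - φ y‖ + 2 * δ ∧
      ‖(φ x : E) - φ y‖ ≤ α * d x y + 2 * δ := by
  classical
  rcases Y.eq_empty_or_nonempty with rfl | ⟨x0, hx0⟩
  · exact ⟨fun x => absurd x.2 (Finset.notMem_empty _), fun x => absurd x.2 (Finset.notMem_empty _)⟩
  let g : Fin n → E := fun x => s⁻¹ • (f x - f x0)
  have hg : ∀ x ∈ Y, ∀ y ∈ Y, d x y ≤ ‖g x - g y‖ ∧ ‖g x - g y‖ ≤ α * d x y := by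
    intro x hx y hy
    have e : g x - g y = s⁻¹ • (f x - f y) := by simp only [g, ← smul_sub]; congr 1; abel
    obtain ⟨h1, h2⟩ := hf x hx y hy
    rw [e, norm_smul, Real.norm_of_nonneg (by positivity)]
    constructor
    · rw [inv_mul_eq_div, le_div_iff₀ hs]; linarith
    · rw [inv_mul_eq_div, div_le_iff₀ hs]; linarith
  have hg0 : ∀ x ∈ Y, ‖g x‖ ≤ R := by
    intro x hx
    have := (hg x hx x0 hx0).2
    have e : g x0 = 0 := by simp [g]
    rw [e, sub_zero] at this
    exact this.trans (hd _ _)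
  choose! r hr1 hr2 using hS
  refine ⟨fun x => ⟨r (g x), hr1 _ (hg0 x x.2)⟩, ?_⟩
  intro x y
  have hx := hr2 _ (hg0 x x.2)
  have hy := hr2 _ (hg0 y y.2)
  obtain ⟨h1, h2⟩ := hg x x.2 y y.2
  have e1 : g x - g y = (r (g x) - r (g y)) + ((g x - r (g x)) - (g y - r (g y))) := by abel
  have e2 : r (g x) - r (g y) = (g x - g y) + ((g y - r (g y)) - (g x - r (g x))) := by abel
  have n1 := norm_add_le (r (g x) - r (g y)) ((g x - r (g x)) - (g y - r (g y)))
  have n2 := norm_add_le (g x - g y) ((g y - r (g y)) - (g x - r (g x)))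
  have n3 := norm_sub_le (g x - r (g x)) (g y - r (g y))
  have n4 := norm_sub_le (g y - r (g y)) (g x - r (g x))
  rw [← e1] at n1
  rw [← e2] at n2
  constructor <;> dsimp only <;> linarith

open Classical in
lemma union_bound {Ω E : Type} [Fintype Ω] (n m : ℕ) (S : Finset E) (K : ℝ)
    (P : (Y : Finset (Fin n)) → (Y → S) → Ω → Prop)
    (hK' : ∀ Y φ, Y.card = m → ∃ B : Finset Ω, (∀ ω, P Y φ ω → ω ∈ B) ∧ (B.card : ℝ) ≤ K)
    (hlt : (n.choose m : ℝ) * (S.card : ℝ) ^ m * K < Fintype.card Ω) :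
    ∃ ω, ∀ Y, Y.card = m → ∀ φ, ¬ P Y φ ω := by
  have hK : ∀ Y φ, Y.card = m → ((Finset.univ.filter (P Y φ)).card : ℝ) ≤ K := by
    intro Y φ hY
    obtain ⟨B, h1, h2⟩ := hK' Y φ hY
    refine le_trans ?_ h2
    exact_mod_cast Finset.card_le_card (fun ω hω => h1 ω (Finset.mem_filter.1 hω).2)
  by_contra! hcon
  have hsub : (Finset.univ : Finset Ω) ⊆ (Finset.powersetCard m Finset.univ).biUnion
      (fun Y : Finset (Fin n) => (Finset.univ : Finset (Y → S)).biUnion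
        (fun φ => Finset.univ.filter (P Y φ))) := by
    intro ω _
    obtain ⟨Y, hY, φ, h⟩ := hcon ω
    simp only [Finset.mem_biUnion, Finset.mem_powersetCard, Finset.mem_filter, Finset.mem_univ,
      true_and, Finset.subset_univ]
    exact ⟨Y, hY, φ, h⟩
  have h1 := (Finset.card_le_card hsub).trans Finset.card_biUnion_le
  have h2 : (Fintype.card Ω : ℝ) ≤ ∑ Y ∈ Finset.powersetCard m (Finset.univ : Finset (Fin n)),
      (S.card : ℝ) ^ m * K := by
    rw [Finset.card_univ] at h1
    calc (Fintype.card Ω : ℝ) ≤ ∑ Y ∈ Finset.powersetCard m (Finset.univ : Finset (Fin n)),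
          ((((Finset.univ : Finset (Y → S)).biUnion
          (fun φ => Finset.univ.filter (P Y φ))).card : ℕ) : ℝ) := by exact_mod_cast h1
      _ ≤ _ := by
        refine Finset.sum_le_sum fun Y hY => ?_
        have hYm := (Finset.mem_powersetCard.1 hY).2
        have h3 : ((((Finset.univ : Finset (Y → S)).biUnion
          (fun φ => Finset.univ.filter (P Y φ))).card : ℕ) : ℝ) ≤
            ∑ φ : Y → S, ((Finset.univ.filter (P Y φ)).card : ℝ) := by
          exact_mod_cast Finset.card_biUnion_le
        refine h3.trans ((Finset.sum_le_sum fun φ _ => hK Y φ hYm).trans ?_)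
        simp [hYm]
  rw [Finset.sum_const, Finset.card_powersetCard, nsmul_eq_mul] at h2
  simp at h2
  linarith

open Classical in
lemma fun_count {ι : Type} [Fintype ι] (P : Finset ι) (ψ : ι → Bool) :
    ∃ B : Finset (ι → Bool), (∀ ω : ι → Bool, (∀ i ∈ P, ω i = ψ i) → ω ∈ B) ∧
      B.card * 2 ^ P.card = 2 ^ Fintype.card ι := by
  refine ⟨Finset.univ.filter (fun ω : ι → Bool => ∀ i ∈ P, ω i = ψ i), by simp, ?_⟩
  have e : Finset.univ.filter (fun ω : ι → Bool => ∀ i ∈ P, ω i = ψ i)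
      = Fintype.piFinset (fun i => if i ∈ P then {ψ i} else Finset.univ) := by
    ext ω
    simp only [Finset.mem_filter, Finset.mem_univ, true_and, Fintype.mem_piFinset]
    refine forall_congr' fun i => ?_
    by_cases h : i ∈ P <;> simp [h]
  rw [e, Fintype.card_piFinset]
  have : ∀ i, (if i ∈ P then {ψ i} else (Finset.univ : Finset Bool)).card
      = if i ∈ P then 1 else 2 := by
    intro i; split_ifs <;> simp
  simp_rw [this]
  have h2 : ∏ i : ι, (if i ∈ P then 2 else 1) = 2 ^ P.card := by
    rw [Finset.prod_ite]; simp
  rw [← h2, ← Finset.prod_mul_distrib]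
  have : ∀ i : ι, (if i ∈ P then 1 else 2) * (if i ∈ P then 2 else 1) = 2 := by
    intro i; split_ifs <;> rfl
  simp [this]

open Classical in
lemma perm_count {n : ℕ} (A : Finset (Fin n)) (F : Fin n → Finset (Fin n))
    (hF : ∀ x ∈ A, 2 * A.card ≤ (F x).card) :
    ∃ B : Finset (Equiv.Perm (Fin n)), (∀ σ : Equiv.Perm (Fin n),
      (∀ x ∈ A, σ x ∉ F x) → σ ∈ B) ∧ B.card ≤
      (n - A.card).factorial * (n - 2 * A.card) ^ A.card := by
  refine ⟨Finset.univ.filter (fun σ : Equiv.Perm (Fin n) => ∀ x ∈ A, σ x ∉ F x), by simp, ?_⟩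
  let T : Finset (A → Fin n) := Fintype.piFinset (fun x : A => (F x)ᶜ)
  have hT : T.card ≤ (n - 2 * A.card) ^ A.card := by
    rw [Fintype.card_piFinset]
    calc _ ≤ ∏ x : A, (n - 2 * A.card) := by
          refine Finset.prod_le_prod' fun x _ => ?_
          rw [Finset.card_compl, Fintype.card_fin]
          have := hF x x.2
          omega
      _ = _ := by simp
  refine (Finset.card_le_mul_card_image_of_maps_to (f := fun σ (x : A) => σ x) (t := T) ?_
    (n - A.card).factorial ?_).trans (Nat.mul_le_mul_left _ hT)
  · intro σ hσ
    simp only [Finset.mem_filter, Finset.mem_univ, true_and] at hσ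
    simp only [T, Fintype.mem_piFinset, Finset.mem_compl]
    exact fun x => hσ x x.2
  · intro g _
    rcases Finset.eq_empty_or_nonempty (Finset.filter (fun σ : Equiv.Perm (Fin n) =>
      (fun (x : A) => σ x) = g) (Finset.univ.filter
        (fun σ : Equiv.Perm (Fin n) => ∀ x ∈ A, σ x ∉ F x))) with h | ⟨σ0, h⟩
    · rw [h]; simp
    · have h0 := (Finset.mem_filter.1 h).2
      have hc : Fintype.card {f : Equiv.Perm (Fin n) // ∀ a, ¬ (a ∉ A) → f a = a}
          = (n - A.card).factorial := by
        rw [← Fintype.card_congr (Equiv.Perm.subtypeEquivSubtypePerm (fun a => a ∉ A)),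
          Fintype.card_perm]
        simp
      rw [← hc, Fintype.card_subtype]
      refine Finset.card_le_card_of_injOn (fun σ => σ0⁻¹ * σ) ?_ ?_
      · intro σ hσ
        have h1 := (Finset.mem_filter.1 hσ).2
        simp only [Finset.coe_filter, Finset.mem_univ, true_and, Set.mem_ofPred_eq, not_not]
        intro a ha
        have := congrFun (h1.trans h0.symm) ⟨a, ha⟩
        simp only at this
        simp [this]
      · intro σ _ τ _ h
        exact mul_left_cancel h

lemma perm_count_real {n : ℕ} (hn : 0 < n) (a : ℕ) (h2 : 2 * a < n) :
    (((n - a).factorial * (n - 2 * a) ^ a : ℕ) : ℝ) ≤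
      n.factorial * Real.exp (-((a : ℝ) ^ 2 / n)) := by
  have h := Nat.factorial_mul_pow_sub_le_factorial (Nat.sub_le n a)
  rw [Nat.sub_sub_self (by omega)] at h
  have h' : ((n - a).factorial : ℝ) * ((n : ℝ) - a) ^ a ≤ n.factorial := by
    have : (((n - a).factorial * (n - a) ^ a : ℕ) : ℝ) ≤ (n.factorial : ℝ) := by exact_mod_cast h
    push_cast [Nat.cast_sub (show a ≤ n by omega)] at this
    exact this
  push_cast [Nat.cast_sub (show 2 * a ≤ n by omega)]
  have hn' : (0 : ℝ) < n := by exact_mod_cast hn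
  have h2' : (2 : ℝ) * a < n := by exact_mod_cast h2
  have ha : (0 : ℝ) ≤ a := by positivity
  have key : (n : ℝ) - 2 * a ≤ (n - a) * Real.exp (-((a : ℝ) / n)) := by
    have h3 := Real.add_one_le_exp (-((a : ℝ) / n))
    have h4 : (n : ℝ) - 2 * a ≤ (n - a) * (-((a : ℝ) / n) + 1) := by
      have : ((n : ℝ) - a) * (-((a : ℝ) / n) + 1) = n - 2 * a + a ^ 2 / n := by field_simp; ring
      rw [this]
      have : 0 ≤ (a : ℝ) ^ 2 / n := by positivity
      linarith
    exact h4.trans (mul_le_mul_of_nonneg_left h3 (by linarith))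
  calc ((n - a).factorial : ℝ) * ((n : ℝ) - 2 * a) ^ a
      ≤ (n - a).factorial * ((n - a) * Real.exp (-((a : ℝ) / n))) ^ a := by
        gcongr
    _ = ((n - a).factorial * ((n : ℝ) - a) ^ a) * Real.exp (-((a : ℝ) ^ 2 / n)) := by
        rw [mul_pow, ← Real.exp_nat_mul, ← mul_assoc]
        congr 2
        ring
    _ ≤ _ := by gcongr

noncomputable def tdist {n : ℕ} (G : SimpleGraph (Fin n)) (T : ℕ) (x y : Fin n) : ℕ :=
  (min (G.edist x y) (T : ℕ∞)).toNat

lemma tdist_coe {n : ℕ} (G : SimpleGraph (Fin n)) (T : ℕ) (x y : Fin n) :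
    (tdist G T x y : ℕ∞) = min (G.edist x y) (T : ℕ∞) := by
  unfold tdist
  apply ENat.natCast_toNat
  exact ne_top_of_le_ne_top (ENat.natCast_ne_top T) (min_le_right _ _)

lemma tdist_metric {n : ℕ} (G : SimpleGraph (Fin n)) (T : ℕ) (hT : 0 < T) :
    IsMetricOn (fun x y => (tdist G T x y : ℝ)) := by
  refine ⟨fun x => ?_, fun x y hxy => ?_, fun x y => ?_, fun x y z => ?_⟩
  · simp [tdist]
  · have h : (0 : ℕ∞) < tdist G T x y := by
      rw [tdist_coe]
      exact lt_min (G.edist_pos_of_ne hxy) (by exact_mod_cast hT)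
    simpa using h
  · simp [tdist, SimpleGraph.edist_comm]
  · have h : (tdist G T x z : ℕ∞) ≤ (tdist G T x y : ℕ∞) + tdist G T y z := by
      rw [tdist_coe, tdist_coe, tdist_coe]
      have h1 : G.edist x z ≤ G.edist x y + G.edist y z := G.edist_triangle
      rcases le_total (G.edist x y) T with h2 | h2
      · rcases le_total (G.edist y z) T with h3 | h3
        · rw [min_eq_left h2, min_eq_left h3]
          exact (min_le_left _ _).trans h1
        · rw [min_eq_right h3]
          exact (min_le_right _ _).trans le_add_self
      · rw [min_eq_right h2]
        exact (min_le_right _ _).trans le_self_add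
    dsimp only
    exact_mod_cast h

lemma tdist_le {n : ℕ} (G : SimpleGraph (Fin n)) (T : ℕ) (x y : Fin n) : tdist G T x y ≤ T := by
  have h : (tdist G T x y : ℕ∞) ≤ T := by rw [tdist_coe]; exact min_le_right _ _
  exact_mod_cast h

lemma tdist_adj {n : ℕ} (G : SimpleGraph (Fin n)) (T : ℕ) (x y : Fin n) (h : G.Adj x y) :
    tdist G T x y ≤ 1 := by
  have h : (tdist G T x y : ℕ∞) ≤ 1 := by
    rw [tdist_coe, SimpleGraph.edist_eq_one_iff_adj.2 h]; exact min_le_left _ _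
  exact_mod_cast h

def pgraph {n D : ℕ} (ω : Fin D → Equiv.Perm (Fin n)) : SimpleGraph (Fin n) :=
  SimpleGraph.fromRel (fun x y => ∃ i, ω i x = y)

def nb {n D : ℕ} (ω : Fin D → Equiv.Perm (Fin n)) (x : Fin n) : Finset (Fin n) :=
  insert x (Finset.univ.image (fun i => ω i x) ∪ Finset.univ.image (fun i => (ω i).symm x))

def pball {n D : ℕ} (ω : Fin D → Equiv.Perm (Fin n)) : ℕ → Fin n → Finset (Fin n)
  | 0, x => {x}
  | k + 1, x => (nb ω x).biUnion (pball ω k)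

lemma nb_card {n D : ℕ} (ω : Fin D → Equiv.Perm (Fin n)) (x : Fin n) :
    (nb ω x).card ≤ 2 * D + 1 := by
  unfold nb
  refine (Finset.card_insert_le _ _).trans ?_
  have h1 := Finset.card_union_le (Finset.univ.image (fun i => ω i x))
    (Finset.univ.image (fun i => (ω i).symm x))
  have h2 := Finset.card_image_le (s := Finset.univ) (f := fun i => ω i x)
  have h3 := Finset.card_image_le (s := Finset.univ) (f := fun i => (ω i).symm x)
  simp only [Finset.card_univ, Fintype.card_fin] at h2 h3
  omega

lemma pball_card {n D : ℕ} (ω : Fin D → Equiv.Perm (Fin n)) (k : ℕ) (x : Fin n) :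
    (pball ω k x).card ≤ (2 * D + 1) ^ k := by
  induction k generalizing x with
  | zero => simp [pball]
  | succ k ih =>
    rw [pball, pow_succ, mul_comm]
    exact (Finset.card_biUnion_le_card_mul _ _ _ fun y _ => ih y).trans
      (Nat.mul_le_mul_right _ (nb_card ω x))

lemma self_mem_pball {n D : ℕ} (ω : Fin D → Equiv.Perm (Fin n)) (k : ℕ) (x : Fin n) :
    x ∈ pball ω k x := by
  induction k with
  | zero => simp [pball]
  | succ k ih =>
    rw [pball, Finset.mem_biUnion]
    exact ⟨x, by simp [nb], ih⟩

lemma walk_mem_pball {n D : ℕ} (ω : Fin D → Equiv.Perm (Fin n)) {x y : Fin n}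
    (p : (pgraph ω).Walk x y) (k : ℕ) (hk : p.length ≤ k) : y ∈ pball ω k x := by
  induction p generalizing k with
  | nil => exact self_mem_pball ω k _
  | @cons u v w h p ih =>
    rw [SimpleGraph.Walk.length_cons] at hk
    obtain ⟨k, rfl⟩ : ∃ j, k = j + 1 := ⟨k - 1, by omega⟩
    rw [pball, Finset.mem_biUnion]
    refine ⟨v, ?_, ih k (by omega)⟩
    rw [pgraph, SimpleGraph.fromRel_adj] at h
    obtain ⟨_, ⟨i, hi⟩ | ⟨i, hi⟩⟩ := h
    · simp only [nb, Finset.mem_insert, Finset.mem_union, Finset.mem_image, Finset.mem_univ,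
        true_and]
      exact Or.inr (Or.inl ⟨i, hi⟩)
    · simp only [nb, Finset.mem_insert, Finset.mem_union, Finset.mem_image, Finset.mem_univ,
        true_and]
      exact Or.inr (Or.inr ⟨i, by rw [← hi]; simp⟩)

lemma tdist_lt_mem {n D : ℕ} (ω : Fin D → Equiv.Perm (Fin n)) (T : ℕ) (x y : Fin n)
    (h : tdist (pgraph ω) T x y < T) : y ∈ pball ω T x := by
  have h1 : (tdist (pgraph ω) T x y : ℕ∞) < T := by exact_mod_cast h
  rw [tdist_coe] at h1
  have h2 : (pgraph ω).edist x y < T := by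
    rcases min_lt_iff.1 h1 with h | h
    · exact h
    · exact absurd h (lt_irrefl _)
  obtain ⟨p, hp⟩ := SimpleGraph.exists_walk_of_edist_ne_top (ne_top_of_lt h2)
  rw [← hp] at h2
  exact walk_mem_pball ω p T (by exact_mod_cast h2.le)

lemma discrete_metric (n : ℕ) : IsMetricOn (fun x y : Fin n => if x = y then (0 : ℝ) else 1) := by
  refine ⟨fun x => by simp, fun x y h => by simp [h], fun x y => by simp [eq_comm], ?_⟩
  intro x y z
  by_cases h1 : x = y <;> by_cases h2 : y = z <;> by_cases h3 : x = z <;> simp_all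

lemma onetwo_metric {n : ℕ} (ω : Sym2 (Fin n) → Bool) : IsMetricOn (fun x y : Fin n =>
    if x = y then (0 : ℝ) else if ω s(x, y) = true then 1 else 2) := by
  refine ⟨fun x => by simp, fun x y h => ?_, fun x y => ?_, ?_⟩
  · simp only [h, if_false]; split_ifs <;> norm_num
  · simp only [Sym2.eq_swap (a := x), eq_comm (a := x)]
  intro x y z
  by_cases h1 : x = y
  · subst h1; simp
  by_cases h2 : y = z
  · subst h2; simp
  simp only [h1, h2, if_false]
  split_ifs <;> norm_num

/-- the part (i) -/
lemma part_one {X : Type} [NormedAddCommGroup X] [NormedSpace ℝ X] [FiniteDimensional ℝ X]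
    (h n : ℕ) (hX : Module.finrank ℝ X = h) (hh : 1 ≤ h) (hn : 2 ≤ n) (C : ℝ) (hC : 82 ≤ C)
    (α : ℝ) (hα : 1 < α) (hα2 : α < 2) :
    ∃ d : Fin n → Fin n → ℝ, IsMetricOn d ∧
      ∀ Y : Finset (Fin n),
        (∃ f : Fin n → X, ∃ s : ℝ, 0 < s ∧
          ∀ x ∈ Y, ∀ y ∈ Y,
            s * d x y ≤ ‖f x - f y‖ ∧ ‖f x - f y‖ ≤ α * s * d x y) →
        (Y.card : ℝ) ≤ 2 * Real.logb 2 n + 2 * h * Real.logb 2 (C / (2 - α)) := by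
  classical
  have hpos : 0 < 2 - α := by linarith
  set δ := (2 - α) / 5 with hδ
  have hδp : 0 < δ := by positivity
  obtain ⟨S, hS1, hS2⟩ := exists_net (E := X) 4 δ (by norm_num) hδp
  rw [hX] at hS1
  set q := 41 / (2 - α) with hq
  have hqp : 0 < q := by positivity
  have hS : (S.card : ℝ) ≤ q ^ h := by
    refine hS1.trans (pow_le_pow_left₀ (by positivity) ?_ h)
    rw [hq, hδ, le_div_iff₀ hpos]
    field_simp
    linarith
  have hn' : (0 : ℝ) < n := by positivity
  set B := 2 * Real.logb 2 n + 2 * h * Real.logb 2 (C / (2 - α)) with hB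
  set k := ⌊B⌋₊ with hk
  have hkB : B < k + 1 := Nat.lt_floor_add_one B
  have hsq : ((n : ℝ) * q ^ h) ^ 2 < 2 ^ k := by
    have hl : Real.logb 2 q + 1 ≤ Real.logb 2 (C / (2 - α)) := by
      have : Real.logb 2 q + 1 = Real.logb 2 (82 / (2 - α)) := by
        rw [show (82 : ℝ) / (2 - α) = q * 2 by rw [hq]; ring, Real.logb_mul hqp.ne' (by norm_num)]
        simp
      rw [this]
      apply Real.logb_le_logb_of_le (by norm_num) (by positivity)
      gcongr
    rw [← Real.logb_lt_logb_iff (b := 2) (by norm_num) (by positivity) (by positivity),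
      Real.logb_pow, Real.logb_pow, Real.logb_mul (by positivity) (by positivity), Real.logb_pow]
    have h1 : (1 : ℝ) ≤ h := by exact_mod_cast hh
    have h2 := mul_le_mul_of_nonneg_left hl (by linarith : (0 : ℝ) ≤ h)
    simp only [Real.logb_self_eq_one (by norm_num : (1 : ℝ) < 2)]
    push_cast
    nlinarith
  set m := k + 1 with hm
  let P : (Y : Finset (Fin n)) → (Y → S) → (Sym2 (Fin n) → Bool) → Prop := fun Y φ ω =>
    ∀ x y : Y, x ≠ y → (ω s(x, y) = true ↔ ‖(φ x : X) - φ y‖ ≤ α + 2 * δ)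
  obtain ⟨ω, hω⟩ := union_bound n m S (2 ^ Fintype.card (Sym2 (Fin n)) / 2 ^ m.choose 2) P
    (by
      intro Y φ hY
      by_cases he : ∃ ω0, P Y φ ω0
      · obtain ⟨ω0, h0⟩ := he
        obtain ⟨B, hB1, hB2⟩ := fun_count (Y.offDiag.image Sym2.mk.uncurry) ω0
        rw [Sym2.card_image_offDiag, hY] at hB2
        refine ⟨B, ?_, ?_⟩
        · intro ω hω
          apply hB1
          intro i hi
          obtain ⟨⟨x, y⟩, hxy, rfl⟩ := Finset.mem_image.1 hi
          rw [Finset.mem_offDiag] at hxy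
          have a1 := hω ⟨x, hxy.1⟩ ⟨y, hxy.2.1⟩ (fun hh => hxy.2.2 (Subtype.ext_iff.1 hh))
          have a2 := h0 ⟨x, hxy.1⟩ ⟨y, hxy.2.1⟩ (fun hh => hxy.2.2 (Subtype.ext_iff.1 hh))
          exact Bool.eq_iff_iff.2 (a1.trans a2.symm)
        · rw [le_div_iff₀ (by positivity)]
          exact_mod_cast hB2.le
      · refine ⟨∅, fun ω hω => absurd ⟨ω, hω⟩ he, ?_⟩
        simp only [Finset.card_empty, Nat.cast_zero]; positivity)
    (by
      have hcard : (Fintype.card (Sym2 (Fin n) → Bool) : ℝ) = 2 ^ Fintype.card (Sym2 (Fin n)) := by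
        rw [Fintype.card_fun]; simp
      rw [hcard, ← mul_div_assoc, div_lt_iff₀ (by positivity), mul_comm]
      refine mul_lt_mul_of_pos_left ?_ (by positivity)
      have h1 : (n.choose m : ℝ) ≤ (n : ℝ) ^ m := by exact_mod_cast Nat.choose_le_pow n m
      have h2 : (S.card : ℝ) ^ m ≤ (q ^ h) ^ m := pow_le_pow_left₀ (by positivity) hS m
      have h3 : (n.choose m : ℝ) * (S.card : ℝ) ^ m ≤ (n * q ^ h) ^ m := by
        rw [mul_pow]; gcongr
      refine h3.trans_lt ?_
      refine lt_of_pow_lt_pow_left₀ 2 (by positivity) ?_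
      rw [← pow_mul, mul_comm m 2, pow_mul, ← pow_mul 2]
      have h4 : m.choose 2 * 2 = k * m := by
        rw [hm, Nat.choose_two_right, Nat.add_sub_cancel,
          Nat.div_mul_cancel ((mul_comm k (k+1)) ▸ Nat.even_mul_succ_self k).two_dvd, mul_comm]
      rw [h4, pow_mul]
      exact pow_lt_pow_left₀ hsq (by positivity) (by omega))
  refine ⟨_, onetwo_metric ω, ?_⟩
  rintro Y ⟨f, s, hs, hf⟩
  by_contra! hcon
  have hmY : m ≤ Y.card := by
    by_contra! hlt
    have : (Y.card : ℝ) ≤ k := by exact_mod_cast (show Y.card ≤ k by omega)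
    have hB0 : 0 ≤ B := by
      have : 0 ≤ Real.logb 2 n := Real.logb_nonneg (by norm_num) (by exact_mod_cast (by omega : 1 ≤ n))
      have : 0 ≤ Real.logb 2 (C / (2 - α)) := Real.logb_nonneg (by norm_num) (by
        rw [le_div_iff₀ hpos]; linarith)
      positivity
    linarith [Nat.floor_le hB0]
  obtain ⟨Y', hY', hc'⟩ := Finset.exists_subset_card_eq hmY
  obtain ⟨φ, hφ⟩ := rounding 4 δ S hS2 _ Y' f s α hs (by
    intro x y
    split_ifs <;> linarith) (fun x hx y hy => hf x (hY' hx) y (hY' hy))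
  refine hω Y' hc' φ ?_
  intro x y hxy
  have hxy' : (x : Fin n) ≠ y := fun hh => hxy (Subtype.ext hh)
  obtain ⟨h1, h2⟩ := hφ x y
  simp only [hxy', if_false] at h1 h2
  constructor
  · intro ht
    simp only [ht, if_true] at h2
    linarith
  · intro hle
    by_contra hf
    simp only [hf] at h1
    norm_num at h1
    linarith

lemma part_two_core {X : Type} [NormedAddCommGroup X] [NormedSpace ℝ X] [FiniteDimensional ℝ X]
    (h n : ℕ) (hX : Module.finrank ℝ X = h) (α : ℝ) (hα : 2 ≤ α) (m T D : ℕ)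
    (hT1 : 2 * α < T) (hT2 : (T : ℝ) ≤ 3 * α) (hb : 2 * (2 * D + 1) ^ T ≤ m) (hm : 1 ≤ m)
    (hmn : m ≤ n)
    (hnum : (n.choose m : ℝ) * ((25 * α) ^ h) ^ m *
      (Real.exp (-(((m / 4 : ℕ) : ℝ) ^ 2 / n))) ^ D < 1) :
    ∃ d : Fin n → Fin n → ℝ, IsMetricOn d ∧
      ∀ Y : Finset (Fin n),
        (∃ f : Fin n → X, ∃ s : ℝ, 0 < s ∧
          ∀ x ∈ Y, ∀ y ∈ Y,
            s * d x y ≤ ‖f x - f y‖ ∧ ‖f x - f y‖ ≤ α * s * d x y) →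
        Y.card < m := by
  classical
  set a := m / 4 with ha
  have h2a : 2 * a < n := by omega
  obtain ⟨S, hS1, hS2⟩ := exists_net (E := X) (3 * α ^ 2) (α / 4) (by positivity) (by positivity)
  rw [hX] at hS1
  have hS : (S.card : ℝ) ≤ (25 * α) ^ h := by
    refine hS1.trans (pow_le_pow_left₀ (by positivity) ?_ h)
    have : 2 * (3 * α ^ 2) / (α / 4) = 24 * α := by field_simp; ring
    rw [this]; linarith
  let F : (Y : Finset (Fin n)) → (Y → S) → Fin n → Finset (Fin n) := fun Y φ x =>
    Finset.univ.filter (fun y => ∃ hx : x ∈ Y, ∃ hy : y ∈ Y,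
      α + 2 * (α / 4) < ‖(φ ⟨x, hx⟩ : X) - φ ⟨y, hy⟩‖)
  let P : (Y : Finset (Fin n)) → (Y → S) → (Fin D → Equiv.Perm (Fin n)) → Prop := fun Y φ ω =>
    (∀ x ∈ Y, 2 * a ≤ (F Y φ x).card) ∧ ∀ i, ∀ x ∈ Y, ω i x ∉ F Y φ x
  have hfac : (0 : ℝ) < (n.factorial : ℝ) := by exact_mod_cast Nat.factorial_pos n
  obtain ⟨ω, hω⟩ := union_bound n m S ((n.factorial * Real.exp (-((a : ℝ) ^ 2 / n))) ^ D) P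
    (by
      intro Y φ hY
      by_cases he : ∃ ω0, P Y φ ω0
      · obtain ⟨ω0, h0, _⟩ := he
        obtain ⟨A, hAY, hA⟩ := Finset.exists_subset_card_eq (show a ≤ Y.card by omega)
        obtain ⟨B, hB1, hB2⟩ := perm_count A (F Y φ)
          (fun x hx => by rw [hA]; exact h0 x (hAY hx))
        refine ⟨Fintype.piFinset (fun _ : Fin D => B), ?_, ?_⟩
        · intro ω hω
          rw [Fintype.mem_piFinset]
          exact fun i => hB1 _ fun x hx => hω.2 i x (hAY hx)
        · rw [Fintype.card_piFinset, Finset.prod_const, Finset.card_univ, Fintype.card_fin]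
          rw [hA] at hB2
          have hr := perm_count_real (n := n) (by omega) a h2a
          have hp' : (B.card : ℝ) ≤ n.factorial * Real.exp (-((a : ℝ) ^ 2 / n)) :=
            le_trans (by exact_mod_cast hB2) hr
          rw [Nat.cast_pow]
          exact pow_le_pow_left₀ (by positivity) hp' D
      · refine ⟨∅, fun ω hω => absurd ⟨ω, hω⟩ he, ?_⟩
        simp only [Finset.card_empty, Nat.cast_zero]; positivity)
    (by
      have hcard : (Fintype.card (Fin D → Equiv.Perm (Fin n)) : ℝ) = (n.factorial : ℝ) ^ D := by
        rw [Fintype.card_fun, Fintype.card_perm]; simp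
      rw [hcard, mul_pow]
      have h2 : (S.card : ℝ) ^ m ≤ ((25 * α) ^ h) ^ m := pow_le_pow_left₀ (by positivity) hS m
      calc _ ≤ (n.choose m : ℝ) * ((25 * α) ^ h) ^ m *
            ((n.factorial : ℝ) ^ D * Real.exp (-((a : ℝ) ^ 2 / n)) ^ D) := by gcongr
        _ = ((n.choose m : ℝ) * ((25 * α) ^ h) ^ m * Real.exp (-((a : ℝ) ^ 2 / n)) ^ D) *
            (n.factorial : ℝ) ^ D := by ring
        _ < 1 * (n.factorial : ℝ) ^ D := mul_lt_mul_of_pos_right hnum (by positivity)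
        _ = _ := one_mul _)
  have hTpos : 0 < T := by
    have : (0 : ℝ) < T := by linarith
    exact_mod_cast this
  refine ⟨_, tdist_metric (pgraph ω) T hTpos, ?_⟩
  rintro Y ⟨f, s, hs, hf⟩
  by_contra! hmY
  obtain ⟨Y', hY', hc'⟩ := Finset.exists_subset_card_eq hmY
  obtain ⟨φ, hφ⟩ := rounding (3 * α ^ 2) (α / 4) S hS2 _ Y' f s α hs (by
    intro x y
    have h1 : (tdist (pgraph ω) T x y : ℝ) ≤ T := by exact_mod_cast tdist_le _ _ _ _
    nlinarith) (fun x hx y hy => hf x (hY' hx) y (hY' hy))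
  refine hω Y' hc' φ ⟨?_, ?_⟩
  · intro x hx
    have hsub : Y' ⊆ F Y' φ x ∪ pball ω T x := by
      intro y hy
      rw [Finset.mem_union]
      by_cases hfar : α + 2 * (α / 4) < ‖(φ ⟨x, hx⟩ : X) - φ ⟨y, hy⟩‖
      · left
        simp only [F, Finset.mem_filter, Finset.mem_univ, true_and]
        exact ⟨hx, hy, hfar⟩
      · right
        apply tdist_lt_mem
        have h1 := (hφ ⟨x, hx⟩ ⟨y, hy⟩).1
        dsimp only at h1
        have : (tdist (pgraph ω) T x y : ℝ) < T := by linarith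
        exact_mod_cast this
    have h1 := (Finset.card_le_card hsub).trans (Finset.card_union_le _ _)
    have h2 := pball_card ω T x
    omega
  · intro i x hx hmem
    simp only [F, Finset.mem_filter, Finset.mem_univ, true_and] at hmem
    obtain ⟨_, hy, hfar⟩ := hmem
    have h2 := (hφ ⟨x, hx⟩ ⟨_, hy⟩).2
    dsimp only at h2
    by_cases hxy : x = ω i x
    · have e : (⟨x, hx⟩ : Y') = ⟨ω i x, hy⟩ := Subtype.ext hxy
      rw [← e, sub_self, norm_zero] at hfar
      linarith
    · have hadj : (pgraph ω).Adj x (ω i x) := by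
        rw [pgraph, SimpleGraph.fromRel_adj]
        exact ⟨hxy, Or.inl ⟨i, rfl⟩⟩
      have h3 : (tdist (pgraph ω) T x (ω i x) : ℝ) ≤ 1 := by
        exact_mod_cast tdist_adj _ _ _ _ hadj
      nlinarith

lemma choose_le_real (n m : ℕ) (hm : 1 ≤ m) :
    (n.choose m : ℝ) ≤ (Real.exp 1 * (n / m)) ^ m := by
  have h1 := Nat.choose_le_pow_div (α := ℝ) m n
  have hm' : (0 : ℝ) < m := by exact_mod_cast hm
  have h2 := Real.pow_div_factorial_le_exp (x := (m : ℝ)) hm'.le m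
  have hf : (0 : ℝ) < m.factorial := by exact_mod_cast Nat.factorial_pos m
  refine h1.trans ?_
  rw [mul_pow, ← Real.exp_nat_mul, mul_one, div_pow, div_le_iff₀ hf]
  rw [div_le_iff₀ hf] at h2
  calc (n : ℝ) ^ m = (n : ℝ) ^ m / m ^ m * m ^ m := by field_simp
    _ ≤ (n : ℝ) ^ m / m ^ m * (Real.exp m * m.factorial) := by gcongr
    _ = _ := by ring

set_option maxHeartbeats 2000000 in
lemma part_two {X : Type} [NormedAddCommGroup X] [NormedSpace ℝ X] [FiniteDimensional ℝ X]
    (h n : ℕ) (hX : Module.finrank ℝ X = h) (hh : 1 ≤ h) (hn : 2 ≤ n)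
    (α : ℝ) (hα : 2 ≤ α) :
    ∃ d : Fin n → Fin n → ℝ, IsMetricOn d ∧
      ∀ Y : Finset (Fin n),
        (∃ f : Fin n → X, ∃ s : ℝ, 0 < s ∧
          ∀ x ∈ Y, ∀ y ∈ Y,
            s * d x y ≤ ‖f x - f y‖ ∧ ‖f x - f y‖ ≤ α * s * d x y) →
        (Y.card : ℝ) ≤ 1024 * (n : ℝ) ^ (1 - (1 / 10 : ℝ) / α) * h * Real.log α := by
  have hn0 : (0 : ℝ) < n := by positivity
  have hn1 : (1 : ℝ) ≤ n := by exact_mod_cast (by omega : 1 ≤ n)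
  have hα0 : 0 < α := by linarith
  have hh1 : (1 : ℝ) ≤ h := by exact_mod_cast hh
  set u : ℝ := (n : ℝ) ^ ((1 / 10 : ℝ) / α) with hu
  have hu0 : 0 < u := by positivity
  have hnu : (n : ℝ) ^ (1 - (1 / 10 : ℝ) / α) = n / u := by
    rw [Real.rpow_sub hn0, Real.rpow_one]
  rw [hnu]
  have hlog2 : (1 / 2 : ℝ) ≤ Real.log 2 := by linarith [Real.log_two_gt_d9]
  have hlogα : Real.log 2 ≤ Real.log α := Real.log_le_log (by norm_num) hα
  set w : ℝ := h * Real.log α with hw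
  have hw2 : 1 / 2 ≤ w := by
    have : (1 : ℝ) * (1 / 2) ≤ h * Real.log α := by
      apply mul_le_mul hh1 (by linarith) (by norm_num) (by linarith)
    linarith
  set M : ℝ := 1024 * (n / u) * h * Real.log α with hM
  have hMw : M = 1024 * (n / u) * w := by rw [hM, hw]; ring
  have hM512 : 512 * (n / u) ≤ M := by
    rw [hMw]
    have : 0 < (n : ℝ) / u := by positivity
    nlinarith
  set m := ⌊M⌋₊ + 1 with hm
  have hM0 : 0 ≤ M := le_trans (by positivity) hM512
  have hmM : M < m := by rw [hm]; push_cast; exact Nat.lt_floor_add_one M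
  -- the trivial case
  by_cases htriv : (n : ℝ) ≤ M
  · refine ⟨_, discrete_metric n, fun Y _ => le_trans ?_ htriv⟩
    have := Finset.card_le_univ Y
    rw [Fintype.card_fin] at this
    exact_mod_cast this
  push Not at htriv
  have hu8 : 8 ≤ u := by
    by_contra! hlt
    have : (n : ℝ) ≤ 512 * (n / u) := by
      rw [← mul_div_assoc, le_div_iff₀ hu0]; nlinarith
    linarith
  have hmn : m ≤ n := by
    have : ⌊M⌋₊ < n := (Nat.floor_lt hM0).2 htriv
    omega
  -- parameters
  set T := ⌊2 * α⌋₊ + 1 with hT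
  set D := ⌈u ^ 2⌉₊ with hD
  have hT1 : 2 * α < T := by rw [hT]; push_cast; exact Nat.lt_floor_add_one _
  have hT2 : (T : ℝ) ≤ 3 * α := by
    rw [hT]; push_cast
    linarith [Nat.floor_le (show 0 ≤ 2 * α by linarith)]
  have hD1 : u ^ 2 ≤ D := Nat.le_ceil _
  have hD2 : (D : ℝ) < u ^ 2 + 1 := Nat.ceil_lt_add_one (by positivity)
  have hbr : (2 * (D : ℝ) + 1) ^ T ≤ n / u := by
    have h1 : 2 * (D : ℝ) + 1 ≤ u ^ (3 : ℝ) := by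
      have : u ^ (3 : ℝ) = u ^ 3 := by exact_mod_cast Real.rpow_natCast u 3
      rw [this]
      nlinarith [mul_le_mul_of_nonneg_right hu8 (sq_nonneg u)]
    calc (2 * (D : ℝ) + 1) ^ T ≤ (u ^ (3 : ℝ)) ^ T := pow_le_pow_left₀ (by positivity) h1 T
      _ = u ^ (3 * (T : ℝ)) := by rw [Real.rpow_mul hu0.le, Real.rpow_natCast]
      _ ≤ u ^ (9 * α) := Real.rpow_le_rpow_of_exponent_le (by linarith) (by linarith)
      _ = (n : ℝ) ^ (9 / 10 : ℝ) := by
          rw [hu, ← Real.rpow_mul hn0.le]; congr 1; field_simp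
      _ ≤ (n : ℝ) ^ (1 - (1 / 10 : ℝ) / α) := by
          apply Real.rpow_le_rpow_of_exponent_le hn1
          have : (1 / 10 : ℝ) / α ≤ 1 / 10 := by rw [div_le_iff₀ hα0]; linarith
          linarith
      _ = _ := hnu
  have hnu1 : 1 ≤ n / u := le_trans (one_le_pow₀ (by linarith [show (0:ℝ) ≤ D by positivity])) hbr
  have hb : 2 * (2 * D + 1) ^ T ≤ m := by
    have : (2 * (2 * D + 1) ^ T : ℝ) ≤ m := by linarith
    exact_mod_cast this
  have hm4 : 4 ≤ m := by
    have : (4 : ℝ) ≤ m := by linarith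
    exact_mod_cast this
  have hm0 : (0 : ℝ) < m := by positivity
  obtain ⟨d, hd1, hd2⟩ := part_two_core (X := X) h n hX α hα m T D hT1 hT2 hb (by omega) hmn (by
    have ha : (m : ℝ) / 8 ≤ ((m / 4 : ℕ) : ℝ) := by
      have : m ≤ 8 * (m / 4) := by omega
      have : (m : ℝ) ≤ 8 * ((m / 4 : ℕ) : ℝ) := by exact_mod_cast this
      linarith
    set a : ℝ := ((m / 4 : ℕ) : ℝ)
    have hch := choose_le_real n m (by omega)
    have hnm : (n : ℝ) / m ≤ u := by
      rw [div_le_iff₀ hm0]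
      have : (n : ℝ) = u * (n / u) := by field_simp
      have : u * (n / u) ≤ u * m := by
        apply mul_le_mul_of_nonneg_left _ hu0.le
        linarith
      linarith
    have h1 : Real.exp 1 * (n / m) ≤ Real.exp u := by
      have h2 : u ≤ Real.exp (u - 1) := by linarith [Real.add_one_le_exp (u - 1)]
      calc Real.exp 1 * (n / m) ≤ Real.exp 1 * Real.exp (u - 1) := by
            gcongr; linarith
        _ = Real.exp u := by rw [← Real.exp_add]; congr 1; ring
    have h2 : (25 * α) ^ h ≤ Real.exp (6 * w) := by
      have : 25 * α ≤ Real.exp (6 * Real.log α) := by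
        have e : Real.exp (6 * Real.log α) = α ^ 6 := by
          rw [show (6 : ℝ) * Real.log α = ((6 : ℕ) : ℝ) * Real.log α by norm_num,
            Real.exp_nat_mul, Real.exp_log hα0]
        rw [e]
        have : (2 : ℝ) ^ 5 ≤ α ^ 5 := pow_le_pow_left₀ (by norm_num) hα 5
        nlinarith
      calc (25 * α) ^ h ≤ (Real.exp (6 * Real.log α)) ^ h := by gcongr
        _ = Real.exp (6 * w) := by rw [← Real.exp_nat_mul, hw]; congr 1; ring
    have h3 : (Real.exp (-(a ^ 2 / n))) ^ D ≤ (Real.exp (- (u ^ 2 * m / (64 * n)))) ^ m := by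
      rw [← Real.exp_nat_mul, ← Real.exp_nat_mul]
      apply Real.exp_le_exp.2
      have : (m / 8 : ℝ) ^ 2 ≤ a ^ 2 := pow_le_pow_left₀ (by positivity) ha 2
      have h4 : u ^ 2 * ((m / 8 : ℝ) ^ 2 / n) ≤ D * (a ^ 2 / n) := by gcongr
      have e : (m : ℝ) * (u ^ 2 * m / (64 * n)) = u ^ 2 * ((m / 8 : ℝ) ^ 2 / n) := by
        field_simp; ring
      linarith
    have h5 : u + 6 * w < u ^ 2 * m / (64 * n) := by
      have h6 : 1024 * w * n < m * u := by
        have : M * u = 1024 * w * n := by rw [hMw]; field_simp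
        nlinarith
      rw [lt_div_iff₀ (by positivity)]
      have h7 : u * (1024 * w * n) < u * (m * u) := mul_lt_mul_of_pos_left h6 hu0
      have h8 : u + 6 * w ≤ 8 * (u * w) := by nlinarith
      have h9 : (u + 6 * w) * (64 * n) ≤ 8 * (u * w) * (64 * n) := by gcongr
      have h10 : 0 ≤ u * w * n := by positivity
      linarith
    calc (n.choose m : ℝ) * ((25 * α) ^ h) ^ m * (Real.exp (-(a ^ 2 / n))) ^ D
        ≤ (Real.exp u) ^ m * (Real.exp (6 * w)) ^ m *
          (Real.exp (- (u ^ 2 * m / (64 * n)))) ^ m := by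
          gcongr
          exact hch.trans (pow_le_pow_left₀ (by positivity) h1 m)
      _ = (Real.exp (u + 6 * w - u ^ 2 * m / (64 * n))) ^ m := by
          rw [← mul_pow, ← mul_pow, ← Real.exp_add, ← Real.exp_add, sub_eq_add_neg]
      _ < 1 := by
          apply pow_lt_one₀ (Real.exp_pos _).le _ (by omega)
          rw [Real.exp_lt_one_iff]
          linarith)
  refine ⟨d, hd1, fun Y hY => ?_⟩
  have := hd2 Y hY
  have h2 : Y.card ≤ ⌊M⌋₊ := by omega
  exact le_trans (by exact_mod_cast h2) (Nat.floor_le hM0)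

/-- Upper bounds on the Ramsey function of a finite dimensional normed space `X`:
(i) for `1 < α < 2` there is an `n`-point metric space whose subsets `α`-embeddable
into `X` have at most `2·log₂ n + 2h·log₂(C/(2-α))` points; (ii) for `α ≥ 2` there is
an `n`-point metric space whose subsets `α`-embeddable into `X` have at most
`C·n^(1-c/α)·h·log α` points. -/
theorem ramsey_upper_bound_finite_dim :
    ∃ c C : ℝ, 0 < c ∧ 0 < C ∧
      ∀ (X : Type) [NormedAddCommGroup X] [NormedSpace ℝ X] [FiniteDimensional ℝ X]
        (h n : ℕ), Module.finrank ℝ X = h → 1 ≤ h → 2 ≤ n →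
        ((∀ α : ℝ, 1 < α → α < 2 →
            ∃ d : Fin n → Fin n → ℝ, IsMetricOn d ∧
              ∀ Y : Finset (Fin n),
                (∃ f : Fin n → X, ∃ s : ℝ, 0 < s ∧
                  ∀ x ∈ Y, ∀ y ∈ Y,
                    s * d x y ≤ ‖f x - f y‖ ∧ ‖f x - f y‖ ≤ α * s * d x y) →
                (Y.card : ℝ) ≤ 2 * Real.logb 2 n + 2 * h * Real.logb 2 (C / (2 - α))) ∧
         (∀ α : ℝ, 2 ≤ α →
            ∃ d : Fin n → Fin n → ℝ, IsMetricOn d ∧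
              ∀ Y : Finset (Fin n),
                (∃ f : Fin n → X, ∃ s : ℝ, 0 < s ∧
                  ∀ x ∈ Y, ∀ y ∈ Y,
                    s * d x y ≤ ‖f x - f y‖ ∧ ‖f x - f y‖ ≤ α * s * d x y) →
                (Y.card : ℝ) ≤ C * (n : ℝ) ^ (1 - c / α) * h * Real.log α)) := by
  refine ⟨1 / 10, 1024, by norm_num, by norm_num, ?_⟩
  intro X _ _ _ h n hX hh hn
  exact ⟨fun α h1 h2 => part_one h n hX hh hn 1024 (by norm_num) α h1 h2,
    fun α h1 => part_two h n hX hh hn α h1⟩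
end

section
/- There exist universal constants c, C > 0 with the following property. Let G = (V,E) be a finite connected d-regular simple graph with d ≥ 3, and suppose G has absolute multiplicative spectral gap γ for some 0 < γ < 1. Then for every real p ≥ 1 and every real α ≥ 1, every subset B ⊆ V such that (B, d_G) admits an α-embedding into ℓ_p satisfies |B| ≤ C·d·|V|^(1 − c·log(1/γ)/(p·α·log d)). -/
/-- A `d`-regular graph `G` has absolute multiplicative spectral gap `γ`:
`‖Av‖₂ ≤ γ·d·‖v‖₂` for every vector `v` orthogonal to the all-ones vector. -/
def HasAbsSpectralGap {V : Type} [Fintype V] [DecidableEq V]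
    (G : SimpleGraph V) [DecidableRel G.Adj] (d : ℕ) (γ : ℝ) : Prop :=
  ∀ v : V → ℝ, (∑ u, v u) = 0 →
    ∑ u, ((G.adjMatrix ℝ).mulVec v u) ^ 2 ≤ (γ * d) ^ 2 * ∑ u, (v u) ^ 2

lemma ers_coarea {V : Type} [DecidableEq V] (W : V → V → ℝ) (B : Finset V)
    (hW : ∀ u v, 0 ≤ W u v) (κ : ℝ)
    (hch : ∀ S ⊆ B, 2 * S.card ≤ B.card → κ * S.card ≤ ∑ u ∈ S, ∑ v ∈ B \ S, W u v) :
    ∀ (n : ℕ) (g : V → ℝ), (∀ u, 0 ≤ g u) → (B.filter (fun u => 0 < g u)).card = n →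
      2 * n ≤ B.card → κ * ∑ u ∈ B, g u ≤ ∑ u ∈ B, ∑ v ∈ B, W u v * |g u - g v| := by
  intro n
  induction n using Nat.strong_induction_on with
  | _ n ih =>
  intro g hg hn h2
  set S := B.filter (fun u => 0 < g u) with hS
  have hSB : S ⊆ B := Finset.filter_subset _ _
  have hnS : ∀ u ∈ B, u ∉ S → g u = 0 := by
    intro u hu hus
    by_contra h
    exact hus (Finset.mem_filter.2 ⟨hu, lt_of_le_of_ne (hg u) (Ne.symm h)⟩)
  rcases S.eq_empty_or_nonempty with he | hne
  · have : ∑ u ∈ B, g u = 0 := Finset.sum_eq_zero (fun u hu => hnS u hu (by simp [he]))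
    rw [this, mul_zero]
    exact Finset.sum_nonneg fun u _ => Finset.sum_nonneg fun v _ => mul_nonneg (hW u v) (abs_nonneg _)
  obtain ⟨w, hwS, hwmin⟩ := Finset.exists_min_image S g hne
  have hwpos : 0 < g w := (Finset.mem_filter.1 hwS).2
  set g' : V → ℝ := fun u => if u ∈ S then g u - g w else if u ∈ B then 0 else g u with hg'
  have hg'0 : ∀ u, 0 ≤ g' u := by
    intro u
    simp only [hg']
    split_ifs with h1 h2
    · linarith [hwmin u h1]
    · exact le_rfl
    · exact hg u
  have hsub : B.filter (fun u => 0 < g' u) ⊂ S := by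
    refine Finset.ssubset_iff_subset_ne.2 ⟨?_, ?_⟩
    · intro u hu
      obtain ⟨huB, hu⟩ := Finset.mem_filter.1 hu
      by_contra h
      simp [hg', h, huB] at hu
    · intro h
      rw [← h] at hwS
      have := (Finset.mem_filter.1 hwS).2
      rw [h] at hwS
      simp [hg', hwS] at this
  have hlt := Finset.card_lt_card hsub
  have key := ih _ (hn ▸ hlt) g' hg'0 rfl (by omega)
  have hS2 := hch S hSB (by omega)
  have e1 : ∑ u ∈ B, g u = ∑ u ∈ B, g' u + g w * S.card := by
    have : ∀ u ∈ B, g u = g' u + (if u ∈ S then g w else 0) := by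
      intro u hu
      by_cases h : u ∈ S
      · simp [hg', h]
      · simp [hg', h, hu, hnS u hu h]
    rw [Finset.sum_congr rfl this, Finset.sum_add_distrib]
    congr 1
    rw [← Finset.sum_filter, Finset.filter_mem_eq_inter, Finset.inter_eq_right.2 hSB]
    simp [mul_comm]
  have e2 : ∑ u ∈ B, ∑ v ∈ B, W u v * |g' u - g' v| + g w * ∑ u ∈ S, ∑ v ∈ B \ S, W u v
      ≤ ∑ u ∈ B, ∑ v ∈ B, W u v * |g u - g v| := by
    have : ∑ u ∈ S, ∑ v ∈ B \ S, W u v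
        = ∑ u ∈ B, ∑ v ∈ B, (if u ∈ S ∧ v ∉ S then W u v else 0) := by
      have h1 : ∀ u ∈ B, ∑ v ∈ B, (if u ∈ S ∧ v ∉ S then W u v else 0)
          = if u ∈ S then ∑ v ∈ B \ S, W u v else 0 := by
        intro u hu
        by_cases h : u ∈ S
        · simp only [h, true_and, if_true]
          rw [← Finset.sum_filter]
          congr 1
          ext v; simp
        · simp [h]
      rw [Finset.sum_congr rfl h1, ← Finset.sum_filter, Finset.filter_mem_eq_inter,
        Finset.inter_eq_right.2 hSB]
    rw [this, Finset.mul_sum, ← Finset.sum_add_distrib]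
    refine Finset.sum_le_sum fun u hu => ?_
    rw [Finset.mul_sum, ← Finset.sum_add_distrib]
    refine Finset.sum_le_sum fun v hv => ?_
    by_cases h1 : u ∈ S <;> by_cases h2 : v ∈ S
    · simp [hg', h1, h2]
    · have := hwmin u h1
      simp only [hg', h1, h2, hv, hnS v hv h2, if_true, if_false, not_false_eq_true, and_self, sub_zero]
      rw [abs_of_nonneg (by linarith), abs_of_nonneg (hg u)]
      linarith
    · have := hwmin v h2
      simp only [hg', h1, h2, hu, hnS u hu h1, if_true, if_false, false_and, zero_sub, abs_neg, mul_zero, add_zero]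
      rw [abs_of_nonneg (by linarith), abs_of_nonneg (hg v)]
      exact mul_le_mul_of_nonneg_left (by linarith) (hW u v)
    · simp [hg', h1, h2, hu, hv, hnS u hu h1, hnS v hv h2]
  have := mul_le_mul_of_nonneg_left hS2 hwpos.le
  rw [e1]
  nlinarith

lemma ers_rpow_diff (p x y : ℝ) (hp : 1 ≤ p) (hx : 0 ≤ x) (hy : 0 ≤ y) :
    |x ^ p - y ^ p| ≤ (64 * p) ^ p * |x - y| ^ p + (x ^ p + y ^ p) / 64 := by
  wlog h : y ≤ x generalizing x y
  · have := this y x hy hx (by linarith)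
    rw [abs_sub_comm, abs_sub_comm x y, add_comm (x ^ p)]; exact this
  have hyp : y ^ p ≤ x ^ p := Real.rpow_le_rpow hy h (by linarith)
  rw [abs_of_nonneg (by linarith), abs_of_nonneg (by linarith)]
  have hy0 : 0 ≤ y ^ p := Real.rpow_nonneg hy _
  have hd0 : 0 ≤ (64 * p) ^ p * (x - y) ^ p :=
    mul_nonneg (Real.rpow_nonneg (by linarith) _) (Real.rpow_nonneg (by linarith) _)
  by_cases hc : 64 * p * (x - y) ≤ x
  · rcases hx.eq_or_lt with h0 | hpos
    · have : x ^ p = 0 := by rw [← h0]; exact Real.zero_rpow (by linarith)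
      linarith
    have hb := one_add_mul_self_le_rpow_one_add (s := y / x - 1) (by
      have : 0 ≤ y / x := by positivity
      linarith) hp
    rw [show 1 + (y / x - 1) = y / x by ring, Real.div_rpow hy hx] at hb
    have hxp : 0 < x ^ p := Real.rpow_pos_of_pos hpos p
    rw [le_div_iff₀ hxp] at hb
    have h3 : p * (1 - y / x) ≤ 1 / 64 := by
      have : p * (1 - y / x) = (p * (x - y)) / x := by field_simp
      rw [this, div_le_iff₀ hpos]; linarith
    nlinarith
  · rw [← Real.mul_rpow (by linarith) (by linarith)]
    have := Real.rpow_le_rpow hx (le_of_not_ge hc) (by linarith : 0 ≤ p)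
    linarith [Real.rpow_nonneg hx p]

lemma ers_poincare_pos {V : Type} [DecidableEq V] (W : V → V → ℝ) (B : Finset V)
    (hW : ∀ u v, 0 ≤ W u v) (hsymm : ∀ u v, W u v = W v u) (β : ℝ)
    (hdeg : ∀ u ∈ B, ∑ v ∈ B, W u v ≤ 2 * β)
    (hch : ∀ S ⊆ B, 2 * S.card ≤ B.card → β / 8 * S.card ≤ ∑ u ∈ S, ∑ v ∈ B \ S, W u v)
    (p : ℝ) (hp : 1 ≤ p) (g : V → ℝ) (hg : ∀ u, 0 ≤ g u)
    (h2 : 2 * (B.filter (fun u => 0 < g u)).card ≤ B.card) :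
    β / 16 * ∑ u ∈ B, g u ^ p ≤ (64 * p) ^ p * ∑ u ∈ B, ∑ v ∈ B, W u v * |g u - g v| ^ p := by
  have hpos : ∀ u, 0 < g u ^ p ↔ 0 < g u := by
    intro u
    constructor
    · intro h
      rcases (hg u).eq_or_lt with h0 | h0
      · rw [← h0, Real.zero_rpow (by linarith)] at h; exact absurd h (lt_irrefl _)
      · exact h0
    · intro h; exact Real.rpow_pos_of_pos h p
  have key := ers_coarea W B hW (β / 8) hch _ (fun u => g u ^ p)
    (fun u => Real.rpow_nonneg (hg u) p) rfl (by simpa only [hpos] using h2)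
  have h3 : ∑ u ∈ B, ∑ v ∈ B, W u v * |g u ^ p - g v ^ p| ≤
      (64 * p) ^ p * ∑ u ∈ B, ∑ v ∈ B, W u v * |g u - g v| ^ p
      + (∑ u ∈ B, ∑ v ∈ B, W u v * g u ^ p + ∑ u ∈ B, ∑ v ∈ B, W u v * g v ^ p) / 64 := by
    simp only [add_div, Finset.sum_div, Finset.mul_sum, ← Finset.sum_add_distrib]
    refine Finset.sum_le_sum fun u _ => Finset.sum_le_sum fun v _ => ?_
    have := mul_le_mul_of_nonneg_left (ers_rpow_diff p (g u) (g v) hp (hg u) (hg v)) (hW u v)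
    linarith
  have h4 : ∑ u ∈ B, ∑ v ∈ B, W u v * g u ^ p ≤ 2 * β * ∑ u ∈ B, g u ^ p := by
    rw [Finset.mul_sum]
    refine Finset.sum_le_sum fun u hu => ?_
    rw [← Finset.sum_mul]
    exact mul_le_mul_of_nonneg_right (hdeg u hu) (Real.rpow_nonneg (hg u) p)
  have h5 : ∑ u ∈ B, ∑ v ∈ B, W u v * g v ^ p = ∑ u ∈ B, ∑ v ∈ B, W u v * g u ^ p := by
    rw [Finset.sum_comm]
    exact Finset.sum_congr rfl fun u _ => Finset.sum_congr rfl fun v _ => by rw [hsymm]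
  linarith

lemma ers_median {V : Type} [DecidableEq V] (B : Finset V) (hB : B.Nonempty) (h : V → ℝ) :
    ∃ M : ℝ, 2 * (B.filter (fun u => M < h u)).card ≤ B.card ∧
      2 * (B.filter (fun u => h u < M)).card ≤ B.card := by
  set Q := B.filter (fun w => 2 * (B.filter (fun u => h w < h u)).card ≤ B.card) with hQ
  have hQne : Q.Nonempty := by
    obtain ⟨w, hw, hmax⟩ := Finset.exists_max_image B h hB
    refine ⟨w, Finset.mem_filter.2 ⟨hw, ?_⟩⟩
    rw [Finset.filter_false_of_mem (fun u hu => not_lt.2 (hmax u hu))]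
    simp
  obtain ⟨w, hw, hmin⟩ := Finset.exists_min_image Q h hQne
  refine ⟨h w, (Finset.mem_filter.1 hw).2, ?_⟩
  rcases (B.filter (fun u => h u < h w)).eq_empty_or_nonempty with he | hne
  · simp [he]
  obtain ⟨z, hz, hzmax⟩ := Finset.exists_max_image _ h hne
  have hzB := (Finset.mem_filter.1 hz)
  have hzQ : z ∉ Q := fun hzq => by linarith [hmin z hzq, hzB.2]
  have h1 : ¬ 2 * (B.filter (fun u => h z < h u)).card ≤ B.card := fun h' =>
    hzQ (Finset.mem_filter.2 ⟨hzB.1, h'⟩)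
  have hdis : Disjoint (B.filter (fun u => h z < h u)) (B.filter (fun u => h u < h w)) := by
    rw [Finset.disjoint_left]
    intro a ha hb
    linarith [hzmax a hb, (Finset.mem_filter.1 ha).2]
  have h2 := Finset.card_le_card (Finset.union_subset (Finset.filter_subset (fun u => h z < h u) B)
    (Finset.filter_subset (fun u => h u < h w) B))
  rw [Finset.card_union_of_disjoint hdis] at h2
  omega

lemma ers_poincare {V : Type} [DecidableEq V] (W : V → V → ℝ) (B : Finset V)
    (hW : ∀ u v, 0 ≤ W u v) (hsymm : ∀ u v, W u v = W v u) (β : ℝ) (hβ : 0 < β)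
    (hdeg : ∀ u ∈ B, ∑ v ∈ B, W u v ≤ 2 * β)
    (hch : ∀ S ⊆ B, 2 * S.card ≤ B.card → β / 8 * S.card ≤ ∑ u ∈ S, ∑ v ∈ B \ S, W u v)
    (p : ℝ) (hp : 1 ≤ p) (h : V → ℝ) :
    β * ∑ u ∈ B, ∑ v ∈ B, |h u - h v| ^ p ≤
      64 * B.card * (128 * p) ^ p * ∑ u ∈ B, ∑ v ∈ B, W u v * |h u - h v| ^ p := by
  rcases B.eq_empty_or_nonempty with he | hne
  · simp [he]
  obtain ⟨M, hM1, hM2⟩ := ers_median B hne h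
  have hp0 : 0 ≤ p := by linarith
  have hcon : ∀ g : V → ℝ, (∀ u v, |g u - g v| ≤ |h u - h v|) →
      (64 * p) ^ p * ∑ u ∈ B, ∑ v ∈ B, W u v * |g u - g v| ^ p ≤
      (64 * p) ^ p * ∑ u ∈ B, ∑ v ∈ B, W u v * |h u - h v| ^ p := by
    intro g hg
    refine mul_le_mul_of_nonneg_left ?_ (Real.rpow_nonneg (by linarith) _)
    exact Finset.sum_le_sum fun u _ => Finset.sum_le_sum fun v _ =>
      mul_le_mul_of_nonneg_left (Real.rpow_le_rpow (abs_nonneg _) (hg u v) hp0) (hW u v)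
  have k1 := (ers_poincare_pos W B hW hsymm β hdeg hch p hp (fun u => max (h u - M) 0)
    (fun u => le_max_right _ _) (by simpa using hM1)).trans
    (hcon _ (fun u v => (abs_max_sub_max_le_abs _ _ _).trans (by simp)))
  have k2 := (ers_poincare_pos W B hW hsymm β hdeg hch p hp (fun u => max (M - h u) 0)
    (fun u => le_max_right _ _) (by simpa using hM2)).trans
    (hcon _ (fun u v => (abs_max_sub_max_le_abs _ _ _).trans (by
      rw [abs_sub_comm (h u)]; simp)))
  set E := ∑ u ∈ B, ∑ v ∈ B, W u v * |h u - h v| ^ p with hE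
  set X := ∑ u ∈ B, |h u - M| ^ p with hX
  have hXle : X ≤ ∑ u ∈ B, max (h u - M) 0 ^ p + ∑ u ∈ B, max (M - h u) 0 ^ p := by
    rw [← Finset.sum_add_distrib]
    refine Finset.sum_le_sum fun u _ => ?_
    have a1 : 0 ≤ max (h u - M) 0 ^ p := Real.rpow_nonneg (le_max_right _ _) _
    have a2 : 0 ≤ max (M - h u) 0 ^ p := Real.rpow_nonneg (le_max_right _ _) _
    rcases le_total M (h u) with hc | hc
    · rw [abs_of_nonneg (by linarith)]
      rw [max_eq_left (by linarith : 0 ≤ h u - M)] at *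
      linarith
    · rw [abs_of_nonpos (by linarith), neg_sub]
      rw [max_eq_left (by linarith : 0 ≤ M - h u)] at *
      linarith
  have hX2 : β * X ≤ 32 * ((64 * p) ^ p * E) := by nlinarith
  have hpair : ∑ u ∈ B, ∑ v ∈ B, |h u - h v| ^ p ≤ 2 ^ p * (2 * B.card * X) := by
    have : 2 ^ p * (2 * B.card * X) = ∑ u ∈ B, ∑ v ∈ B, 2 ^ p * (|h u - M| ^ p + |h v - M| ^ p) := by
      simp only [← Finset.mul_sum, Finset.sum_add_distrib, Finset.sum_const, nsmul_eq_mul, ← hX]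
      ring
    rw [this]
    refine Finset.sum_le_sum fun u _ => Finset.sum_le_sum fun v _ => ?_
    have tri : |h u - h v| ≤ |h u - M| + |h v - M| := by
      rw [abs_sub_comm (h v) M]; exact abs_sub_le _ _ _
    have a1 : 0 ≤ |h u - M| ^ p := Real.rpow_nonneg (abs_nonneg _) _
    have a2 : 0 ≤ |h v - M| ^ p := Real.rpow_nonneg (abs_nonneg _) _
    have a3 : (0:ℝ) ≤ 2 ^ p := by positivity
    rcases le_total (|h u - M|) (|h v - M|) with hc | hc
    · have := Real.rpow_le_rpow (abs_nonneg _) (by linarith : |h u - h v| ≤ 2 * |h v - M|) hp0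
      rw [Real.mul_rpow (by norm_num) (abs_nonneg _)] at this
      nlinarith
    · have := Real.rpow_le_rpow (abs_nonneg _) (by linarith : |h u - h v| ≤ 2 * |h u - M|) hp0
      rw [Real.mul_rpow (by norm_num) (abs_nonneg _)] at this
      nlinarith
  have h128 : (128 * p) ^ p = 2 ^ p * (64 * p) ^ p := by
    rw [← Real.mul_rpow (by norm_num) (by linarith)]; congr 1; ring
  calc β * ∑ u ∈ B, ∑ v ∈ B, |h u - h v| ^ p ≤ β * (2 ^ p * (2 * B.card * X)) :=
        mul_le_mul_of_nonneg_left hpair hβ.le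
    _ = (2 ^ p * (2 * B.card)) * (β * X) := by ring
    _ ≤ (2 ^ p * (2 * B.card)) * (32 * ((64 * p) ^ p * E)) :=
        mul_le_mul_of_nonneg_left hX2 (by positivity)
    _ = _ := by rw [h128]; ring

lemma ers_prune {V : Type} [Fintype V] [DecidableEq V] (W : V → V → ℝ) (B : Finset V)
    (hB : B.Nonempty)
    (hW : ∀ u v, 0 ≤ W u v) (β ε : ℝ) (hβ : β = B.card / Fintype.card V)
    (hε0 : 0 ≤ ε) (hε : ε ≤ β / 32)
    (hmix : ∀ S T : Finset V, (∑ u ∈ S, ∑ v ∈ T, W u v - S.card * T.card / Fintype.card V) ^ 2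
      ≤ ε ^ 2 * (S.card * T.card)) :
    ∃ B' ⊆ B, B.card ≤ 2 * B'.card ∧ (∀ u ∈ B', ∑ v ∈ B', W u v ≤ 2 * β) ∧
      (∀ S ⊆ B', 2 * S.card ≤ B'.card → β / 8 * S.card ≤ ∑ u ∈ S, ∑ v ∈ B' \ S, W u v) := by
  have hb : (0:ℝ) < B.card := by exact_mod_cast hB.card_pos
  have hn : (0:ℝ) < Fintype.card V := by
    have : 0 < Fintype.card V := Fintype.card_pos_iff.2 ⟨hB.choose⟩
    exact_mod_cast this
  have hβ0 : 0 < β := by rw [hβ]; positivity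
  have hε2 : ε ^ 2 ≤ β ^ 2 / 1024 := by nlinarith
  set T := B.filter (fun u => 2 * β < ∑ v ∈ B, W u v) with hT
  have hTB : T ⊆ B := Finset.filter_subset _ _
  have hTc : (T.card : ℝ) ≤ B.card / 1024 := by
    have h1 := hmix T B
    have h2 : 2 * β * T.card ≤ ∑ u ∈ T, ∑ v ∈ B, W u v := by
      have := Finset.card_nsmul_le_sum T (fun u => ∑ v ∈ B, W u v) (2 * β)
        (fun u hu => (Finset.mem_filter.1 hu).2.le)
      rw [nsmul_eq_mul] at this; linarith
    have h3 : (T.card : ℝ) * B.card / Fintype.card V = β * T.card := by rw [hβ]; ring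
    rw [h3] at h1
    have hx : (0:ℝ) ≤ T.card := by positivity
    have h4 : (β * T.card) ^ 2 ≤ (∑ u ∈ T, ∑ v ∈ B, W u v - β * T.card) ^ 2 :=
      pow_le_pow_left₀ (by positivity) (by linarith) 2
    have h5 : ε ^ 2 * (T.card * B.card) ≤ β ^ 2 / 1024 * (T.card * B.card) :=
      mul_le_mul_of_nonneg_right hε2 (by positivity)
    rcases hx.eq_or_lt with h0 | h0
    · rw [← h0]; positivity
    · have h6 : (β ^ 2 * T.card) * T.card ≤ (β ^ 2 * T.card) * (B.card / 1024) := by linarith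
      exact le_of_mul_le_mul_left h6 (by positivity)
  set B1 := B \ T with hB1
  have hB1c : (B1.card : ℝ) = B.card - T.card := by
    rw [hB1, Finset.card_sdiff_of_subset hTB, Nat.cast_sub (Finset.card_le_card hTB)]
  have hB1B : B1 ⊆ B := Finset.sdiff_subset
  have hdeg1 : ∀ u ∈ B1, ∑ v ∈ B, W u v ≤ 2 * β := by
    intro u hu
    obtain ⟨h1, h2⟩ := Finset.mem_sdiff.1 hu
    by_contra h
    exact h2 (Finset.mem_filter.2 ⟨h1, not_le.1 h⟩)
  set F := B1.powerset.filter (fun R => 4 * R.card ≤ 3 * B1.card ∧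
    ∑ u ∈ R, ∑ v ∈ B1 \ R, W u v ≤ β / 8 * R.card) with hF
  have hFne : F.Nonempty := ⟨∅, by simp [hF]⟩
  obtain ⟨R, hRF, hRmax⟩ := Finset.exists_max_image F Finset.card hFne
  obtain ⟨hRB, hR34, hRW⟩ := by simpa [hF] using hRF
  have hR34' : (4:ℝ) * R.card ≤ 3 * B1.card := by exact_mod_cast hR34
  have hsd : ((B1 \ R).card : ℝ) = B1.card - R.card := by
    rw [Finset.card_sdiff_of_subset hRB, Nat.cast_sub (Finset.card_le_card hRB)]
  have hRc : (R.card : ℝ) ≤ B.card / 10 := by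
    have h1 := hmix R (B1 \ R)
    have hx : (0:ℝ) ≤ R.card := by positivity
    have hy : ((B1 \ R).card : ℝ) ≤ B.card := by
      rw [hsd]; linarith [(by positivity : (0:ℝ) ≤ T.card)]
    have hy2 : (1023 / 4096 : ℝ) * B.card ≤ (B1 \ R).card := by rw [hsd]; linarith
    have h3 : β * R.card * (1023 / 4096) ≤ (R.card : ℝ) * (B1 \ R).card / Fintype.card V := by
      rw [hβ, le_div_iff₀ hn]
      have : (B.card : ℝ) / Fintype.card V * R.card * (1023 / 4096) * Fintype.card V
        = R.card * ((1023 / 4096 : ℝ) * B.card) := by field_simp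
      rw [this]
      exact mul_le_mul_of_nonneg_left hy2 hx
    have hbr : 0 ≤ β * R.card := by positivity
    have h4 : (β * R.card / 10) ^ 2 ≤
        (∑ u ∈ R, ∑ v ∈ B1 \ R, W u v - (R.card : ℝ) * (B1 \ R).card / Fintype.card V) ^ 2 := by
      rw [← neg_sq (∑ u ∈ R, ∑ v ∈ B1 \ R, W u v - _)]
      exact pow_le_pow_left₀ (by positivity) (by linarith) 2
    have h5 : ε ^ 2 * (R.card * (B1 \ R).card) ≤ β ^ 2 / 1024 * (R.card * B.card) := by
      gcongr
    rcases hx.eq_or_lt with h0 | h0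
    · rw [← h0]; positivity
    · have h6 : (β ^ 2 * R.card) * R.card ≤ (β ^ 2 * R.card) * (B.card * (100 / 1024)) := by linarith
      have := le_of_mul_le_mul_left h6 (by positivity)
      linarith
  refine ⟨B1 \ R, Finset.sdiff_subset.trans hB1B, ?_, ?_, ?_⟩
  · have : (B.card : ℝ) ≤ 2 * (B1 \ R).card := by rw [hsd]; linarith
    exact_mod_cast this
  · intro u hu
    refine le_trans ?_ (hdeg1 u (Finset.sdiff_subset hu))
    exact Finset.sum_le_sum_of_subset_of_nonneg (Finset.sdiff_subset.trans hB1B)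
      (fun v _ _ => hW u v)
  · intro S hS hS2
    by_contra hlt
    push Not at hlt
    have hdis : Disjoint R S := by
      rw [Finset.disjoint_left]; intro a ha hb
      exact (Finset.mem_sdiff.1 (hS hb)).2 ha
    have hSne : S.Nonempty := by
      rw [Finset.nonempty_iff_ne_empty]; rintro rfl; simp at hlt
    have hcard : (R ∪ S).card = R.card + S.card := Finset.card_union_of_disjoint hdis
    have hmem : R ∪ S ∈ F := by
      rw [hF, Finset.mem_filter, Finset.mem_powerset]
      refine ⟨Finset.union_subset hRB (hS.trans Finset.sdiff_subset), ?_, ?_⟩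
      · have hS2' : (2:ℝ) * S.card ≤ (B1 \ R).card := by exact_mod_cast hS2
        have : (4:ℝ) * (R ∪ S).card ≤ 3 * B1.card := by
          rw [hcard]; push_cast; rw [hsd] at hS2'; linarith
        exact_mod_cast this
      · rw [Finset.sum_union hdis, hcard]
        push_cast
        have i1 : ∑ u ∈ R, ∑ v ∈ B1 \ (R ∪ S), W u v ≤ ∑ u ∈ R, ∑ v ∈ B1 \ R, W u v :=
          Finset.sum_le_sum fun u _ => Finset.sum_le_sum_of_subset_of_nonneg
            (Finset.sdiff_subset_sdiff le_rfl Finset.subset_union_left) (fun v _ _ => hW u v)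
        have i2 : B1 \ (R ∪ S) = (B1 \ R) \ S := by
          ext x; simp only [Finset.mem_sdiff, Finset.mem_union]; tauto
        have i3 : ∑ u ∈ S, ∑ v ∈ B1 \ (R ∪ S), W u v = ∑ u ∈ S, ∑ v ∈ (B1 \ R) \ S, W u v := by
          rw [i2]
        linarith
    have := hRmax _ hmem
    have := hSne.card_pos
    omega

lemma ers_sum_mulVec {V : Type} [Fintype V] [DecidableEq V]
    (G : SimpleGraph V) [DecidableRel G.Adj] (d : ℕ) (hreg : G.IsRegularOfDegree d) (v : V → ℝ) :
    ∑ u, (G.adjMatrix ℝ).mulVec v u = d * ∑ u, v u := by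
  simp only [Matrix.mulVec, dotProduct]
  rw [Finset.sum_comm]
  simp only [← Finset.sum_mul]
  rw [Finset.mul_sum]
  refine Finset.sum_congr rfl fun w _ => ?_
  congr 1
  simp only [SimpleGraph.adjMatrix_apply, G.adj_comm _ w]
  rw [Finset.sum_boole]
  have := hreg w
  rw [← this, ← SimpleGraph.card_neighborFinset_eq_degree, SimpleGraph.neighborFinset_eq_filter]

lemma ers_pow_mulVec {V : Type} [Fintype V] [DecidableEq V]
    (G : SimpleGraph V) [DecidableRel G.Adj] (d : ℕ) (γ : ℝ) (hreg : G.IsRegularOfDegree d)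
    (hgap : HasAbsSpectralGap G d γ) (t : ℕ) (v : V → ℝ) (hv : ∑ u, v u = 0) :
    ∑ u, ((G.adjMatrix ℝ ^ t).mulVec v u) = 0 ∧
    ∑ u, ((G.adjMatrix ℝ ^ t).mulVec v u) ^ 2 ≤ ((γ * d) ^ t) ^ 2 * ∑ u, (v u) ^ 2 := by
  induction t with
  | zero => simp [hv]
  | succ k ih =>
    rw [pow_succ', ← Matrix.mulVec_mulVec]
    refine ⟨by rw [ers_sum_mulVec G d hreg, ih.1, mul_zero], ?_⟩
    refine (hgap _ ih.1).trans ?_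
    calc _ ≤ (γ * d) ^ 2 * (((γ * d) ^ k) ^ 2 * ∑ u, (v u) ^ 2) :=
          mul_le_mul_of_nonneg_left ih.2 (sq_nonneg _)
      _ = _ := by ring

lemma ers_pow_one {V : Type} [Fintype V] [DecidableEq V]
    (G : SimpleGraph V) [DecidableRel G.Adj] (d : ℕ) (hreg : G.IsRegularOfDegree d) (t : ℕ) (a : ℝ) :
    (G.adjMatrix ℝ ^ t).mulVec (fun _ => a) = fun _ => (d:ℝ) ^ t * a := by
  induction t generalizing a with
  | zero => simp
  | succ k ih =>
    rw [pow_succ, ← Matrix.mulVec_mulVec]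
    have : (G.adjMatrix ℝ).mulVec (fun _ => a) = fun _ => (d:ℝ) * a := by
      funext u
      exact SimpleGraph.adjMatrix_mulVec_const_apply_of_regular hreg
    rw [this, ih]
    funext; ring

lemma ers_mixing {V : Type} [Fintype V] [DecidableEq V] [Nonempty V]
    (G : SimpleGraph V) [DecidableRel G.Adj] (d : ℕ) (hd : 0 < d) (γ : ℝ)
    (hreg : G.IsRegularOfDegree d)
    (hgap : HasAbsSpectralGap G d γ) (t : ℕ) (S T : Finset V) :
    (∑ u ∈ S, ∑ v ∈ T, (G.adjMatrix ℝ ^ t) u v / (d:ℝ) ^ t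
      - S.card * T.card / Fintype.card V) ^ 2 ≤ (γ ^ t) ^ 2 * (S.card * T.card) := by
  have hn : (0:ℝ) < Fintype.card V := by exact_mod_cast Fintype.card_pos
  have hd' : (0:ℝ) < (d:ℝ) ^ t := by positivity
  set a : ℝ := T.card / Fintype.card V with ha
  set v : V → ℝ := fun u => (if u ∈ T then 1 else 0) - a with hv
  have hv0 : ∑ u, v u = 0 := by
    simp only [hv, Finset.sum_sub_distrib, Finset.sum_const, nsmul_eq_mul, Finset.card_univ]
    simp [ha]
    field_simp
    simp
  have hv2 : ∑ u, v u ^ 2 ≤ T.card := by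
    have : ∀ u, v u ^ 2 = (if u ∈ T then (1:ℝ) else 0) - 2 * a * v u - a ^ 2 := by
      intro u; simp only [hv]; split_ifs <;> ring
    simp only [this, Finset.sum_sub_distrib, ← Finset.mul_sum, hv0]
    simp
    positivity
  have hp := (ers_pow_mulVec G d γ hreg hgap t v hv0).2
  have hrow : ∀ u, ∑ w ∈ T, (G.adjMatrix ℝ ^ t) u w
      = (G.adjMatrix ℝ ^ t).mulVec v u + (d:ℝ) ^ t * a := by
    intro u
    have h1 : (G.adjMatrix ℝ ^ t).mulVec (fun _ => a) u = (d:ℝ) ^ t * a :=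
      congrFun (ers_pow_one G d hreg t a) u
    rw [← h1]
    simp only [Matrix.mulVec, dotProduct, ← Finset.sum_add_distrib, ← mul_add, hv]
    simp
  have heq : ∑ u ∈ S, ∑ w ∈ T, (G.adjMatrix ℝ ^ t) u w / (d:ℝ) ^ t
      - S.card * T.card / Fintype.card V = (∑ u ∈ S, (G.adjMatrix ℝ ^ t).mulVec v u) / (d:ℝ) ^ t := by
    simp only [← Finset.sum_div, hrow, Finset.sum_add_distrib, Finset.sum_const, nsmul_eq_mul]
    rw [ha]
    field_simp
    ring
  rw [heq, div_pow, div_le_iff₀ (by positivity)]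
  calc (∑ u ∈ S, (G.adjMatrix ℝ ^ t).mulVec v u) ^ 2
      ≤ S.card * ∑ u ∈ S, ((G.adjMatrix ℝ ^ t).mulVec v u) ^ 2 := sq_sum_le_card_mul_sum_sq
    _ ≤ S.card * ∑ u, ((G.adjMatrix ℝ ^ t).mulVec v u) ^ 2 := by
        refine mul_le_mul_of_nonneg_left ?_ (by positivity)
        exact Finset.sum_le_sum_of_subset_of_nonneg (Finset.subset_univ _) (fun _ _ _ => sq_nonneg _)
    _ ≤ S.card * (((γ * d) ^ t) ^ 2 * T.card) := by
        refine mul_le_mul_of_nonneg_left (hp.trans ?_) (by positivity)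
        exact mul_le_mul_of_nonneg_left hv2 (sq_nonneg _)
    _ = _ := by rw [mul_pow]; ring

lemma ers_gamma_ge {V : Type} [Fintype V] [DecidableEq V] [Nonempty V]
    (G : SimpleGraph V) [DecidableRel G.Adj] (d : ℕ) (hd : 0 < d) (γ : ℝ) (hγ : 0 < γ)
    (hreg : G.IsRegularOfDegree d) (hgap : HasAbsSpectralGap G d γ) : 1 ≤ γ * d := by
  obtain ⟨u⟩ := (inferInstance : Nonempty V)
  have : 0 < (G.neighborFinset u).card := by
    rw [SimpleGraph.card_neighborFinset_eq_degree, hreg u]; exact hd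
  obtain ⟨w, hw⟩ := Finset.card_pos.1 this
  rw [SimpleGraph.mem_neighborFinset] at hw
  have hne : u ≠ w := hw.ne
  have h := hgap (Pi.single u 1 - Pi.single w 1) (by simp)
  have e : ∑ x, ((Pi.single u 1 - Pi.single w 1 : V → ℝ) x) ^ 2 = 2 := by
    rw [← Finset.sum_subset (Finset.subset_univ {u, w})]
    · rw [Finset.sum_pair hne]
      simp [hne, hne.symm]; norm_num
    · intro x _ hx
      simp only [Finset.mem_insert, Finset.mem_singleton, not_or] at hx
      simp [hx.1, hx.2]
  have e2 : 2 ≤ ∑ x, ((G.adjMatrix ℝ).mulVec (Pi.single u 1 - Pi.single w 1) x) ^ 2 := by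
    calc (2:ℝ) = ∑ x ∈ {u, w}, ((G.adjMatrix ℝ).mulVec (Pi.single u 1 - Pi.single w 1) x) ^ 2 := by
          rw [Finset.sum_pair hne]
          simp [hw, hw.symm]; norm_num
      _ ≤ _ := Finset.sum_le_sum_of_subset_of_nonneg (Finset.subset_univ _)
        (fun _ _ _ => sq_nonneg _)
  rw [e] at h
  have h3 : 1 ≤ (γ * d) ^ 2 := by linarith
  have : 0 ≤ γ * d := by positivity
  nlinarith

lemma ers_ball {V : Type} [Fintype V] [DecidableEq V]
    (G : SimpleGraph V) [DecidableRel G.Adj] (d : ℕ) (hd : 2 ≤ d)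
    (hreg : G.IsRegularOfDegree d) (hconn : G.Connected) (N : ℕ) :
    ∀ u : V, (Finset.univ.filter (fun v => G.dist u v < N)).card < d ^ N := by
  induction N with
  | zero => intro u; simp
  | succ k ih =>
    intro u
    have hsub : Finset.univ.filter (fun v => G.dist u v < k + 1) ⊆
        {u} ∪ (G.neighborFinset u).biUnion
          (fun w => Finset.univ.filter (fun v => G.dist w v < k)) := by
      intro v hv
      have hv' := (Finset.mem_filter.1 hv).2
      rw [Finset.mem_union, Finset.mem_singleton, Finset.mem_biUnion]
      obtain ⟨q, hq⟩ := hconn.exists_walk_length_eq_dist u v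
      cases q with
      | nil => exact Or.inl rfl
      | cons h q' =>
        right
        refine ⟨_, by rw [SimpleGraph.mem_neighborFinset]; exact h, ?_⟩
        rw [Finset.mem_filter]
        refine ⟨Finset.mem_univ _, ?_⟩
        have := SimpleGraph.dist_le q'
        rw [SimpleGraph.Walk.length_cons] at hq
        omega
    have h1 := (Finset.card_le_card hsub).trans (Finset.card_union_le _ _)
    have h2 : ((G.neighborFinset u).biUnion
          (fun w => Finset.univ.filter (fun v => G.dist w v < k))).card ≤ d * (d ^ k - 1) := by
      refine (Finset.card_biUnion_le_card_mul _ _ (d ^ k - 1) (fun w _ => ?_)).trans ?_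
      · have := ih w; omega
      · rw [SimpleGraph.card_neighborFinset_eq_degree, hreg u]
    rw [Finset.card_singleton] at h1
    have hp : 1 ≤ d ^ k := Nat.one_le_pow _ _ (by omega)
    have : d * (d ^ k - 1) = d ^ (k + 1) - d := by rw [Nat.mul_sub, pow_succ]; ring_nf
    have : d ≤ d ^ (k + 1) := by rw [pow_succ]; nlinarith
    omega

lemma ers_lp_poincare {V : Type} [DecidableEq V] (W : V → V → ℝ) (B : Finset V)
    (hW : ∀ u v, 0 ≤ W u v) (hsymm : ∀ u v, W u v = W v u) (β : ℝ) (hβ : 0 < β)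
    (hdeg : ∀ u ∈ B, ∑ v ∈ B, W u v ≤ 2 * β)
    (hch : ∀ S ⊆ B, 2 * S.card ≤ B.card → β / 8 * S.card ≤ ∑ u ∈ S, ∑ v ∈ B \ S, W u v)
    (p : ℝ) (hp : 1 ≤ p) (f : V → lp (fun _ : ℕ => ℝ) (ENNReal.ofReal p)) :
    β * ∑ u ∈ B, ∑ v ∈ B, ‖f u - f v‖ ^ p ≤
      64 * B.card * (128 * p) ^ p * ∑ u ∈ B, ∑ v ∈ B, W u v * ‖f u - f v‖ ^ p := by
  have hpr : (ENNReal.ofReal p).toReal = p := ENNReal.toReal_ofReal (by linarith)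
  have hs : ∀ u v, HasSum (fun i => |f u i - f v i| ^ p) (‖f u - f v‖ ^ p) := by
    intro u v
    have := lp.hasSum_norm (p := ENNReal.ofReal p) (by rw [hpr]; linarith) (f u - f v)
    rw [hpr] at this
    simpa using this
  have h1 : HasSum (fun i => β * ∑ u ∈ B, ∑ v ∈ B, |f u i - f v i| ^ p)
      (β * ∑ u ∈ B, ∑ v ∈ B, ‖f u - f v‖ ^ p) :=
    (hasSum_sum fun u _ => hasSum_sum fun v _ => hs u v).mul_left _
  have h2 : HasSum (fun i => 64 * B.card * (128 * p) ^ p *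
        ∑ u ∈ B, ∑ v ∈ B, W u v * |f u i - f v i| ^ p)
      (64 * B.card * (128 * p) ^ p * ∑ u ∈ B, ∑ v ∈ B, W u v * ‖f u - f v‖ ^ p) :=
    (hasSum_sum fun u _ => hasSum_sum fun v _ => (hs u v).mul_left _).mul_left _
  exact hasSum_le (fun i => ers_poincare W B hW hsymm β hβ hdeg hch p hp (fun u => f u i)) h1 h2

lemma ers_core {V : Type} [Fintype V] [DecidableEq V]
    (G : SimpleGraph V) [DecidableRel G.Adj] (d : ℕ) (γ : ℝ) (hconn : G.Connected) (hd : 3 ≤ d)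
    (hreg : G.IsRegularOfDegree d) (hγ : 0 < γ) (hgap : HasAbsSpectralGap G d γ)
    (p α : ℝ) (hp : 1 ≤ p) (hα : 1 ≤ α) (B : Finset V) (hB : B.Nonempty)
    (f : V → lp (fun _ : ℕ => ℝ) (ENNReal.ofReal p)) (s : ℝ) (hs : 0 < s)
    (hf : ∀ u ∈ B, ∀ v ∈ B, s * (G.dist u v : ℝ) ≤ ‖f u - f v‖ ∧
                  ‖f u - f v‖ ≤ α * s * (G.dist u v : ℝ))
    (t : ℕ) (ht : γ ^ t ≤ (B.card : ℝ) / Fintype.card V / 32) (N : ℕ)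
    (hN : 4 * d ^ N ≤ B.card) : (N : ℝ) ≤ 32768 * (p * α * t) := by
  have hne : Nonempty V := ⟨hB.choose⟩
  set W : V → V → ℝ := fun u v => (G.adjMatrix ℝ ^ t) u v / (d:ℝ) ^ t with hWdef
  have hW : ∀ u v, 0 ≤ W u v := by
    intro u v
    simp only [hWdef, SimpleGraph.adjMatrix_pow_apply_eq_card_walk]
    positivity
  have hsymm : ∀ u v, W u v = W v u := by
    intro u v
    have : (G.adjMatrix ℝ ^ t).IsSymm := (G.isSymm_adjMatrix (α := ℝ)).pow t
    simp only [hWdef]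
    rw [this.apply]
  have hWd : ∀ u v, W u v ≠ 0 → G.dist u v ≤ t := by
    intro u v h
    by_contra hlt
    apply h
    simp only [hWdef, SimpleGraph.adjMatrix_pow_apply_eq_card_walk]
    rw [div_eq_zero_iff]; left
    rw [Nat.cast_eq_zero, Fintype.card_eq_zero_iff]
    refine ⟨fun q => hlt ?_⟩
    have h1 := SimpleGraph.dist_le q.1
    have h2 : q.1.length = t := q.2
    omega
  set β : ℝ := (B.card : ℝ) / Fintype.card V with hβ
  have hb : (0:ℝ) < B.card := by exact_mod_cast hB.card_pos
  have hn : (0:ℝ) < Fintype.card V := by exact_mod_cast Fintype.card_pos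
  have hβ0 : 0 < β := by positivity
  obtain ⟨B', hB'B, hcard, hdeg, hch⟩ := ers_prune W B hB hW β (γ ^ t) hβ (by positivity) ht
    (ers_mixing G d (by omega) γ hreg hgap t)
  have hb' : (0:ℝ) < B'.card := by
    have := hB.card_pos
    have : 0 < B'.card := by omega
    exact_mod_cast this
  have hP := ers_lp_poincare W B' hW hsymm β hβ0 hdeg hch p hp f
  have hp0 : 0 ≤ p := by linarith
  have hαst : 0 ≤ α * s * t := by positivity
  have hup : ∑ u ∈ B', ∑ v ∈ B', W u v * ‖f u - f v‖ ^ p ≤ B'.card * (2 * β * (α * s * t) ^ p) := by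
    rw [← nsmul_eq_mul]
    refine Finset.sum_le_card_nsmul _ _ _ fun u hu => ?_
    calc ∑ v ∈ B', W u v * ‖f u - f v‖ ^ p ≤ ∑ v ∈ B', W u v * (α * s * t) ^ p := by
          refine Finset.sum_le_sum fun v hv => ?_
          by_cases h0 : W u v = 0
          · simp [h0]
          refine mul_le_mul_of_nonneg_left ?_ (hW u v)
          refine Real.rpow_le_rpow (lp.norm_nonneg' _) ?_ hp0
          refine (hf u (hB'B hu) v (hB'B hv)).2.trans ?_
          refine mul_le_mul_of_nonneg_left ?_ (by positivity)
          exact_mod_cast hWd u v h0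
      _ = (∑ v ∈ B', W u v) * (α * s * t) ^ p := by rw [Finset.sum_mul]
      _ ≤ _ := mul_le_mul_of_nonneg_right (hdeg u hu) (Real.rpow_nonneg hαst _)
  have hlow : B'.card * ((B'.card / 2 : ℝ) * (s * N) ^ p) ≤ ∑ u ∈ B', ∑ v ∈ B', ‖f u - f v‖ ^ p := by
    rw [← nsmul_eq_mul]
    refine Finset.card_nsmul_le_sum _ _ _ fun u hu => ?_
    set Q := B'.filter (fun v => ¬ G.dist u v < N) with hQ
    have hQc : (B'.card / 2 : ℝ) ≤ Q.card := by
      have h1 : (B'.filter (fun v => G.dist u v < N)).card + Q.card = B'.card := by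
        rw [hQ, ← Finset.card_filter_add_card_filter_not (s := B') (fun v => G.dist u v < N)]
      have h2 : (B'.filter (fun v => G.dist u v < N)).card ≤
          (Finset.univ.filter (fun v => G.dist u v < N)).card :=
        Finset.card_le_card (Finset.filter_subset_filter _ (Finset.subset_univ _))
      have h3 := ers_ball G d (by omega) hreg hconn N u
      have : B'.card ≤ 2 * Q.card := by omega
      have : (B'.card : ℝ) ≤ 2 * Q.card := by exact_mod_cast this
      linarith
    calc (B'.card / 2 : ℝ) * (s * N) ^ p ≤ Q.card * (s * N) ^ p :=
          mul_le_mul_of_nonneg_right hQc (by positivity)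
      _ = Q.card • (s * N) ^ p := by rw [nsmul_eq_mul]
      _ ≤ ∑ v ∈ Q, ‖f u - f v‖ ^ p := by
          refine Finset.card_nsmul_le_sum _ _ _ fun v hv => ?_
          obtain ⟨hv1, hv2⟩ := Finset.mem_filter.1 hv
          refine Real.rpow_le_rpow (by positivity) ?_ hp0
          refine le_trans ?_ (hf u (hB'B hu) v (hB'B hv1)).1
          refine mul_le_mul_of_nonneg_left ?_ hs.le
          exact_mod_cast not_lt.1 hv2
      _ ≤ _ := Finset.sum_le_sum_of_subset_of_nonneg (Finset.filter_subset _ _)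
          (fun v _ _ => Real.rpow_nonneg (lp.norm_nonneg' _) _)
  have hfin : (s * N) ^ p ≤ 256 * ((128 * p) ^ p * (α * s * t) ^ p) := by
    have hk : (0:ℝ) ≤ 64 * B'.card * (128 * p) ^ p := by positivity
    have h1 := (mul_le_mul_of_nonneg_left hlow hβ0.le).trans
      (hP.trans (mul_le_mul_of_nonneg_left hup hk))
    have h2 : (β * B'.card * B'.card / 2) * (s * N) ^ p ≤
      (β * B'.card * B'.card / 2) * (256 * ((128 * p) ^ p * (α * s * t) ^ p)) := by
      linarith
    exact le_of_mul_le_mul_left h2 (by positivity)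
  have h256 : (256:ℝ) ≤ 256 ^ p := by
    have := Real.rpow_le_rpow_of_exponent_le (by norm_num : (1:ℝ) ≤ 256) hp
    rwa [Real.rpow_one] at this
  have hfin2 : (s * N) ^ p ≤ (256 * ((128 * p) * (α * s * t))) ^ p := by
    rw [Real.mul_rpow (x := 256) (by norm_num) (by positivity),
      Real.mul_rpow (x := 128 * p) (by positivity) hαst]
    exact hfin.trans (mul_le_mul_of_nonneg_right h256 (by positivity))
  have h5 := (Real.rpow_le_rpow_iff (by positivity) (by positivity) (by linarith)).1 hfin2
  have h6 : s * N ≤ s * (32768 * (p * α * t)) := by linarith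
  exact le_of_mul_le_mul_left h6 hs

theorem expander_ramsey_upper :
    ∃ c C : ℝ, 0 < c ∧ 0 < C ∧
      ∀ (V : Type) [Fintype V] [DecidableEq V] (G : SimpleGraph V) [DecidableRel G.Adj]
        (d : ℕ) (γ : ℝ),
        G.Connected → 3 ≤ d → G.IsRegularOfDegree d → 0 < γ → γ < 1 →
        HasAbsSpectralGap G d γ →
        ∀ (p α : ℝ), 1 ≤ p → 1 ≤ α →
          ∀ B : Finset V,
            (∃ f : V → lp (fun _ : ℕ => ℝ) (ENNReal.ofReal p), ∃ s : ℝ, 0 < s ∧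
              ∀ u ∈ B, ∀ v ∈ B,
                s * (G.dist u v : ℝ) ≤ ‖f u - f v‖ ∧
                  ‖f u - f v‖ ≤ α * s * (G.dist u v : ℝ)) →
            (B.card : ℝ) ≤ C * d * (Fintype.card V : ℝ) ^
              (1 - c * Real.log (1 / γ) / (p * α * Real.log d)) := by
  refine ⟨1 / 65538, 32, by norm_num, by norm_num, ?_⟩
  intro V _ _ G _ d γ hconn hd hreg hγ hγ1 hgap p α hp hα B hemb
  obtain ⟨f, s, hs, hf⟩ := hemb
  rcases B.eq_empty_or_nonempty with he | hB
  · subst he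
    simp only [Finset.card_empty, Nat.cast_zero]
    positivity
  have hne : Nonempty V := ⟨hB.choose⟩
  have hb : (0:ℝ) < B.card := by exact_mod_cast hB.card_pos
  have hn1 : (1:ℝ) ≤ Fintype.card V := by exact_mod_cast Fintype.card_pos
  have hn : (0:ℝ) < Fintype.card V := by linarith
  have hbn : (B.card : ℝ) ≤ Fintype.card V := by exact_mod_cast Finset.card_le_univ B
  have hd3 : (3:ℝ) ≤ d := by exact_mod_cast hd
  have hd0 : (0:ℝ) < d := by linarith
  set n : ℝ := (Fintype.card V : ℝ) with hndef
  have hlogd : 0 < Real.log d := Real.log_pos (by linarith)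
  have hpα : 1 ≤ p * α := by nlinarith
  have hγd := ers_gamma_ge G d (by omega) γ hγ hreg hgap
  set L := Real.log (1 / γ) with hL
  have hLeq : L = - Real.log γ := by rw [hL, one_div, Real.log_inv]
  have hL0 : 0 < L := by rw [hLeq]; linarith [Real.log_neg hγ hγ1]
  have hLd : L ≤ Real.log d := by
    have := Real.log_nonneg hγd
    rw [Real.log_mul hγ.ne' hd0.ne'] at this
    linarith
  have hex : ∃ t : ℕ, γ ^ t ≤ (B.card : ℝ) / n / 32 := by
    obtain ⟨t, ht⟩ := exists_pow_lt_of_lt_one (show 0 < (B.card : ℝ) / n / 32 by positivity) hγ1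
    exact ⟨t, ht.le⟩
  classical
  set t := Nat.find hex with htdef
  have ht : γ ^ t ≤ (B.card : ℝ) / n / 32 := Nat.find_spec hex
  have hβ1 : (B.card : ℝ) / n ≤ 1 := by rw [div_le_one hn]; exact hbn
  have ht0 : t ≠ 0 := by
    intro h0
    rw [h0, pow_zero] at ht; linarith
  have ht1 : (1:ℝ) ≤ t := by exact_mod_cast Nat.one_le_iff_ne_zero.2 ht0
  have hmin : (B.card : ℝ) / n / 32 < γ ^ (t - 1) := by
    have := Nat.find_min hex (m := t - 1) (by omega)
    exact not_le.1 this
  have hlogn : 0 ≤ Real.log n := Real.log_nonneg hn1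
  have hexp : n ^ (1 - 1 / 65538 * L / (p * α * Real.log d)) =
      Real.exp (Real.log n - Real.log n * (1 / 65538 * L / (p * α * Real.log d))) := by
    rw [Real.rpow_def_of_pos hn]; congr 1; ring
  have hratio : L / (p * α * Real.log d) ≤ 1 := by
    rw [div_le_one (by positivity)]
    nlinarith
  by_cases hcase : Real.log n ≤ 65538 * (p * α * t) * Real.log d
  · have h1 : (B.card : ℝ) ≤ 32 * d * (n * γ ^ t) := by
      have e : γ ^ t = γ ^ (t - 1) * γ := by
        rw [← pow_succ]; congr 1; omega
      have h2 : γ ^ (t - 1) ≤ d * γ ^ t := by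
        rw [e]
        have : 0 ≤ γ ^ (t - 1) := by positivity
        nlinarith
      have h3 : (B.card : ℝ) / n ≤ 32 * (d * γ ^ t) := by linarith
      rw [div_le_iff₀ hn] at h3
      linarith
    refine h1.trans (mul_le_mul_of_nonneg_left ?_ (by positivity))
    rw [hexp]
    have e : n * γ ^ t = Real.exp (Real.log n - t * L) := by
      rw [Real.exp_sub, Real.exp_log hn, hLeq, mul_neg, Real.exp_neg, ← Real.log_pow,
        Real.exp_log (by positivity), div_inv_eq_mul]
    rw [e]
    apply Real.exp_le_exp.2
    have h5 : Real.log n * (1 / 65538 * L / (p * α * Real.log d)) ≤ t * L := by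
      rw [← mul_div_assoc, div_le_iff₀ (by positivity)]
      have := mul_le_mul_of_nonneg_right hcase hL0.le
      linarith
    linarith
  · push Not at hcase
    set K : ℝ := 32768 * (p * α * t) with hK
    have hK0 : 0 ≤ K := by positivity
    have hBlt : (B.card : ℝ) < 4 * (d:ℝ) ^ (⌊K⌋₊ + 1) := by
      by_contra hcon
      push Not at hcon
      have h1 := ers_core G d γ hconn hd hreg hγ hgap p α hp hα B hB f s hs hf t ht (⌊K⌋₊ + 1)
        (by exact_mod_cast hcon)
      have h2 := Nat.lt_floor_add_one K
      push_cast at h1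
      linarith
    have hpow : (d:ℝ) ^ (⌊K⌋₊ + 1) ≤ Real.exp (Real.log n / 2) := by
      rw [← Real.exp_log (show (0:ℝ) < (d:ℝ) ^ (⌊K⌋₊ + 1) by positivity), Real.log_pow]
      apply Real.exp_le_exp.2
      push_cast
      have h1 := Nat.floor_le hK0
      have h2 : 1 ≤ p * α * t := by nlinarith
      have h3 : ((⌊K⌋₊ : ℝ) + 1) * Real.log d ≤ (32769 * (p * α * t)) * Real.log d :=
        mul_le_mul_of_nonneg_right (by linarith) hlogd.le
      linarith
    have hle : Real.exp (Real.log n / 2) ≤ n ^ (1 - 1 / 65538 * L / (p * α * Real.log d)) := by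
      rw [hexp]
      apply Real.exp_le_exp.2
      have : Real.log n * (1 / 65538 * L / (p * α * Real.log d)) ≤ Real.log n * (1 / 2) := by
        refine mul_le_mul_of_nonneg_left ?_ hlogn
        rw [mul_div_assoc]
        linarith
      linarith
    have hX : 0 ≤ n ^ (1 - 1 / 65538 * L / (p * α * Real.log d)) := by positivity
    nlinarith
end
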